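/- Let p be a prime, n, d ≥ 1, U an open subset of ℚ_p^d, and f : U → ℚ_p^n an analytic map. Let v ≥ n and x₀ ∈ U be such that w_p(f(x₀)) ≤ v. Then for λ-almost every x in a neighbourhood of x₀ one has w_p(f(x)) ≤ v, where λ denotes the Haar measure on ℚ_p^d. -/

import Mathlib

open MeasureTheory Metric
open scoped ENNReal NNReal

namespace PadicDioph

variable (p : ℕ) [Fact p.Prime]

noncomputable instance : MeasurableSpace ℚ_[p] := borel _
instance : BorelSpace ℚ_[p] := ⟨rfl⟩

/-- Membership in `ℤ[1/p]`, viewed inside `ℚ`. -/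
def IsZInvP (q : ℚ) : Prop := ∃ (z : ℤ) (k : ℕ), q = (z : ℚ) / (p : ℚ) ^ k

/-- Sup norm (max of archimedean absolute values) of a finite tuple of rationals. -/
noncomputable def supNormR {m : ℕ} (q : Fin m → ℚ) : ℝ := ⨆ i, |(q i : ℝ)|

/-- Sup of the `p`-adic absolute values of a finite tuple of rationals. -/
noncomputable def supNormP {m : ℕ} (q : Fin m → ℚ) : ℝ := ⨆ i, ‖((q i : ℚ_[p]))‖

/-- Sup norm of an integer tuple together with an extra integer coordinate. -/
noncomputable def supNormZ {n : ℕ} (q0 : ℤ) (q : Fin n → ℤ) : ℝ :=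
  max |(q0 : ℝ)| (⨆ i, |((q i : ℤ) : ℝ)|)

/-- The classical Diophantine exponent `w(y)` of `y ∈ ℚ_p^n`: the supremum of all `v > 0`
such that `|q₀ + q·y|_p ≤ ‖(q₀,q)‖_∞^{-v}` has infinitely many integer solutions. -/
noncomputable def wExp {n : ℕ} (y : Fin n → ℚ_[p]) : ℝ≥0∞ :=
  ⨆ (v : ℝ) (_ : 0 < v ∧
    {qq : ℤ × (Fin n → ℤ) |
      ‖((qq.1 : ℚ_[p]) + ∑ i, (qq.2 i : ℚ_[p]) * y i)‖ ≤
        (supNormZ qq.1 qq.2) ^ (-v)}.Infinite), ENNReal.ofReal v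

/-- `y` is very well approximable if `w(y) > n + 1`. -/
def IsVWA {n : ℕ} (y : Fin n → ℚ_[p]) : Prop :=
  ENNReal.ofReal ((n : ℝ) + 1) < wExp p y

/-- The defining condition of the exponent `w_p`: there are solutions
`q̃ = (q₀, q) ∈ ℤ[1/p]^{n+1}` of `|q·y + q₀|_p < (‖q‖_p ‖q̃‖_∞)^{-v} ‖q̃‖_∞^{-1}`
with `‖q‖_p ‖q̃‖_∞` arbitrarily large. -/
def WpCond {n : ℕ} (y : Fin n → ℚ_[p]) (v : ℝ) : Prop :=
  ∀ T : ℝ, ∃ (q0 : ℚ) (q : Fin n → ℚ),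
    IsZInvP p q0 ∧ (∀ i, IsZInvP p (q i)) ∧
    T < supNormP p q * supNormR (Fin.cons q0 q) ∧
    ‖(∑ i, (q i : ℚ_[p]) * y i) + (q0 : ℚ_[p])‖ <
      (supNormP p q * supNormR (Fin.cons q0 q)) ^ (-v) * (supNormR (Fin.cons q0 q))⁻¹

/-- The exponent `w_p(y)`. -/
noncomputable def wpExp {n : ℕ} (y : Fin n → ℚ_[p]) : ℝ≥0∞ :=
  ⨆ (v : ℝ) (_ : 0 < v ∧ WpCond p y v), ENNReal.ofReal v

/-- `Π_+` of a tuple of rationals: the product of `|q_i|_∞` over the nonzero coordinates. -/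
noncomputable def piPlusQ {m : ℕ} (q : Fin m → ℚ) : ℝ :=
  ∏ i, (if q i = 0 then 1 else |(q i : ℝ)|)

/-- `Π_+` of `(q₀, q)` with integer coordinates. -/
noncomputable def piPlusZ {n : ℕ} (q0 : ℤ) (q : Fin n → ℤ) : ℝ :=
  (if q0 = 0 then 1 else |(q0 : ℝ)|) * ∏ i, (if q i = 0 then 1 else |((q i : ℤ) : ℝ)|)

/-- `y ∈ ℚ_p^n` is very well multiplicatively approximable. -/
def IsVWMA {n : ℕ} (y : Fin n → ℚ_[p]) : Prop :=
  ∃ ε : ℝ, 0 < ε ∧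
    {qq : ℤ × (Fin n → ℤ) |
      ‖((qq.1 : ℚ_[p]) + ∑ i, (qq.2 i : ℚ_[p]) * y i)‖ ≤
        (piPlusZ qq.1 qq.2) ^ (-(1 + ε))}.Infinite

/-- A measure on `ℚ_p^n` is strongly extremal if almost every point is not VWMA. -/
def StronglyExtremal {n : ℕ} (μ : Measure (Fin n → ℚ_[p])) : Prop :=
  ∀ᵐ y ∂μ, ¬ IsVWMA p y

/-- `δ(g_t u_y D^{n+1})` for the one-parameter flow: `g_t` has `p`-adic component
`diag(p^{-t},1,…,1)` and archimedean component `p^{-t/(n+1)}·Id`. -/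
noncomputable def deltaOne {n : ℕ} (y : Fin n → ℚ_[p]) (t : ℕ) : ℝ :=
  sInf { c : ℝ | ∃ qt : Fin (n + 1) → ℚ, (∀ i, IsZInvP p (qt i)) ∧ qt ≠ 0 ∧
    c = ((p : ℝ) ^ (-(t : ℝ) / ((n : ℝ) + 1)) * supNormR qt) *
        max (‖(((p : ℚ_[p]) ^ t)⁻¹ * ((qt 0 : ℚ_[p]) + ∑ i : Fin n, (qt i.succ : ℚ_[p]) * y i))‖)
            (⨆ i : Fin n, ‖((qt i.succ : ℚ_[p]))‖) }

/-- The exponent `γ(y)`. -/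
noncomputable def gammaExp {n : ℕ} (y : Fin n → ℚ_[p]) : ℝ :=
  sSup {c : ℝ | 0 ≤ c ∧ ∀ N : ℕ, ∃ t : ℕ, N ≤ t ∧
    deltaOne p y t ≤ (p : ℝ) ^ (-(c * (t : ℝ)))}

/-- `δ(g_t u_y D^{n+1})` for the multiparameter flow: for `t = (t₀,…,t_n)` with
`T = Σ tᵢ`, the `p`-adic component of `g_t` is `diag(p^{-T},1,…,1)` and the archimedean
component is `diag(p^{-t₀},…,p^{-t_n})`. -/
noncomputable def deltaMulti {n : ℕ} (y : Fin n → ℚ_[p]) (t : Fin (n + 1) → ℕ) : ℝ :=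
  sInf { c : ℝ | ∃ qt : Fin (n + 1) → ℚ, (∀ i, IsZInvP p (qt i)) ∧ qt ≠ 0 ∧
    c = (⨆ i, (p : ℝ) ^ (-((t i : ℝ))) * |(qt i : ℝ)|) *
        max (‖(((p : ℚ_[p]) ^ (∑ i, t i))⁻¹ *
              ((qt 0 : ℚ_[p]) + ∑ i : Fin n, (qt i.succ : ℚ_[p]) * y i))‖)
            (⨆ i : Fin n, ‖((qt i.succ : ℚ_[p]))‖) }

/-- The support of a measure on a metric space. -/
def measSupp {X : Type*} [MetricSpace X] [MeasurableSpace X] (μ : Measure X) : Set X :=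
  {x | ∀ r : ℝ, 0 < r → 0 < μ (ball x r)}

/-- `‖f‖_{μ,B}`. -/
noncomputable def muSupNorm {X : Type*} [MetricSpace X] [MeasurableSpace X]
    (μ : Measure X) (B : Set X) (f : X → ℚ_[p]) : ℝ :=
  sSup {c : ℝ | 0 < μ {x ∈ B | c < ‖f x‖}}

/-- `f` is `(C, α)`-good on `V` with respect to `μ`. -/
def IsGoodOn {X : Type*} [MetricSpace X] [MeasurableSpace X] (μ : Measure X)
    (C a : ℝ) (V : Set X) (f : X → ℚ_[p]) : Prop :=
  ∀ (x₀ : X) (r : ℝ), 0 < r → x₀ ∈ measSupp μ → ball x₀ r ⊆ V →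
    ∀ ε : ℝ, 0 < ε →
      μ {x ∈ ball x₀ r | ‖f x‖ < ε} ≤
        ENNReal.ofReal (C * (ε / muSupNorm p μ (ball x₀ r) f) ^ a) * μ (ball x₀ r)

/-- A metric space is Besicovitch: any family of balls whose centers exhaust a bounded
set `A` admits a countable subfamily covering `A` with multiplicity at most `N`. -/
def IsBesicovitch (X : Type*) [MetricSpace X] : Prop :=
  ∃ N : ℕ, ∀ (A : Set X), Bornology.IsBounded A →
    ∀ F : Set (X × ℝ), (∀ b ∈ F, 0 < b.2) → (∀ x ∈ A, ∃ r : ℝ, (x, r) ∈ F) →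
      ∃ S ⊆ F, S.Countable ∧ (∀ x ∈ A, ∃ b ∈ S, x ∈ ball b.1 b.2) ∧
        ∀ x : X, {b ∈ S | x ∈ ball b.1 b.2}.encard ≤ N

/-- `μ` is `D`-Federer on the open set `U`. -/
def IsDFedererOn {X : Type*} [MetricSpace X] [MeasurableSpace X]
    (μ : Measure X) (D : ℝ) (U : Set X) : Prop :=
  ∀ x ∈ measSupp μ, ∀ r : ℝ, 0 < r → ball x (3 * r) ⊆ U →
    μ (ball x (3 * r)) ≤ ENNReal.ofReal D * μ (ball x r)

/-- `μ` is Federer. -/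
def IsFederer {X : Type*} [MetricSpace X] [MeasurableSpace X] (μ : Measure X) : Prop :=
  ∀ᵐ x ∂μ, ∃ U : Set X, IsOpen U ∧ x ∈ U ∧ 0 < μ U ∧ ∃ D : ℝ, 0 < D ∧ IsDFedererOn μ D U

/-- The pair `(f, μ)` is good: `μ`-a.e. point has a neighbourhood `V` and `C, α > 0`
such that every affine combination `c₀ + Σ cᵢ fᵢ` is `(C, α)`-good on `V` w.r.t. `μ`. -/
def GoodPair {X : Type*} [MetricSpace X] [MeasurableSpace X] {n : ℕ}
    (f : X → (Fin n → ℚ_[p])) (μ : Measure X) : Prop :=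
  ∀ᵐ x ∂μ, ∃ V : Set X, IsOpen V ∧ x ∈ V ∧ ∃ C a : ℝ, 0 < C ∧ 0 < a ∧
    ∀ c0 : ℚ_[p], ∀ c : Fin n → ℚ_[p],
      IsGoodOn p μ C a V (fun x => c0 + ∑ i, c i * f x i)

/-- `(f, μ)` is nonplanar in the affine subspace `L`. -/
def NonplanarIn {X : Type*} [MetricSpace X] [MeasurableSpace X] {n : ℕ}
    (f : X → (Fin n → ℚ_[p])) (μ : Measure X)
    (L : AffineSubspace ℚ_[p] (Fin n → ℚ_[p])) : Prop :=
  ∀ B : Set X, IsOpen B → B.Nonempty → 0 < μ B →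
    affineSpan ℚ_[p] (f '' (B ∩ measSupp μ)) = L

/-- `f` is nondegenerate in the affine subspace `L` at `x`: `f` takes values in `L` and the
span of the partial derivatives of `f` at `x` up to some order is the linear part of `L`. -/
def NondegenerateAt {d n : ℕ} (f : (Fin d → ℚ_[p]) → (Fin n → ℚ_[p]))
    (L : AffineSubspace ℚ_[p] (Fin n → ℚ_[p])) (x : Fin d → ℚ_[p]) : Prop :=
  (∀ u, f u ∈ L) ∧ ∃ m : ℕ,
    Submodule.span ℚ_[p]
      {v : Fin n → ℚ_[p] | ∃ j : ℕ, j ≤ m ∧ 1 ≤ j ∧ ∃ vs : Fin j → (Fin d → ℚ_[p]),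
        v = iteratedFDeriv ℚ_[p] j f x vs} = L.direction

/-- An analytic chart of the `d`-dimensional submanifold `M` of `ℚ_p^n`: an analytic map
`f` on an open set `U`, injective on `U`, immersive, a homeomorphism onto its image, whose
image is a relatively open subset of `M`. -/
def IsChart (d n : ℕ) (M : Set (Fin n → ℚ_[p]))
    (U : Set (Fin d → ℚ_[p])) (f : (Fin d → ℚ_[p]) → (Fin n → ℚ_[p])) : Prop :=
  IsOpen U ∧ AnalyticOnNhd ℚ_[p] f U ∧ Set.InjOn f U ∧
  (∀ x ∈ U, Function.Injective (fderiv ℚ_[p] f x)) ∧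
  (∀ x ∈ U, ∀ V : Set (Fin d → ℚ_[p]), IsOpen V → x ∈ V →
      ∃ W : Set (Fin n → ℚ_[p]), IsOpen W ∧ f x ∈ W ∧ W ∩ f '' U ⊆ f '' (V ∩ U)) ∧
  ∃ W : Set (Fin n → ℚ_[p]), IsOpen W ∧ M ∩ W = f '' U

/-- `M` is a `d`-dimensional analytic submanifold of `ℚ_p^n`. -/
def IsAnalyticSubmanifold (d n : ℕ) (M : Set (Fin n → ℚ_[p])) : Prop :=
  M.Nonempty ∧ ∀ y ∈ M, ∃ (U : Set (Fin d → ℚ_[p])) (f : (Fin d → ℚ_[p]) → (Fin n → ℚ_[p])),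
    IsChart p d n M U f ∧ y ∈ f '' U


/-- Largest maximal minor of an integer matrix. -/
def W {j N : ℕ} (b : Matrix (Fin j) (Fin N) ℤ) : ℕ :=
  Finset.univ.sup fun I : Fin j → Fin N => ((b.submatrix id I).det).natAbs

lemma le_W {j N : ℕ} (b : Matrix (Fin j) (Fin N) ℤ) (I : Fin j → Fin N) :
    ((b.submatrix id I).det).natAbs ≤ W b :=
  Finset.le_sup (f := fun I : Fin j → Fin N => ((b.submatrix id I).det).natAbs)
    (Finset.mem_univ I)

lemma W_mul {j N : ℕ} (A : Matrix (Fin j) (Fin j) ℤ) (b : Matrix (Fin j) (Fin N) ℤ) :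
    W (A * b) = A.det.natAbs * W b := by
  have key : ∀ I : Fin j → Fin N, (((A * b).submatrix id I).det).natAbs
      = A.det.natAbs * ((b.submatrix id I).det).natAbs := by
    intro I
    have : (A * b).submatrix id I = A * b.submatrix id I := by
      ext i k; simp [Matrix.mul_apply]
    rw [this, Matrix.det_mul, Int.natAbs_mul]
  unfold W
  simp_rw [key]
  apply le_antisymm
  · apply Finset.sup_le
    intro I _
    exact Nat.mul_le_mul_left _ (le_W b I)
  · rcases isEmpty_or_nonempty (Fin j → Fin N) with h | h
    · simp
    · obtain ⟨I, _, hI⟩ := Finset.exists_mem_eq_sup Finset.univ Finset.univ_nonempty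
        (fun I : Fin j → Fin N => ((b.submatrix id I).det).natAbs)
      rw [hI]
      exact Finset.le_sup (f := fun I : Fin j → Fin N =>
        A.det.natAbs * ((b.submatrix id I).det).natAbs) (Finset.mem_univ I)

lemma exists_W {j N : ℕ} (b : Matrix (Fin j) (Fin N) ℤ) (h : W b ≠ 0) :
    ∃ I : Fin j → Fin N, ((b.submatrix id I).det).natAbs = W b := by
  rcases isEmpty_or_nonempty (Fin j → Fin N) with h' | h'
  · exact absurd (by simp [W]) h
  · obtain ⟨I, _, hI⟩ := Finset.exists_mem_eq_sup Finset.univ Finset.univ_nonempty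
      (fun I : Fin j → Fin N => ((b.submatrix id I).det).natAbs)
    exact ⟨I, hI.symm⟩

/-- The rational vector of an integer vector. -/
def castQ {N : ℕ} (q : Fin N → ℤ) : Fin N → ℚ := fun l => (q l : ℚ)

lemma li_of_W {j N : ℕ} (b : Matrix (Fin j) (Fin N) ℤ) (h : W b ≠ 0) :
    LinearIndependent ℚ (fun i => castQ (b i)) := by
  obtain ⟨I, hI⟩ := exists_W b h
  have hdet : (b.submatrix id I).det ≠ 0 := by
    intro h0; rw [h0] at hI; exact h (by simpa using hI.symm)
  let M : Matrix (Fin j) (Fin j) ℚ := (b.submatrix id I).map (Int.cast : ℤ → ℚ)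
  have hM : M.det ≠ 0 := by
    have : M.det = (((b.submatrix id I).det : ℤ) : ℚ) := by
      simp only [M]
      exact (RingHom.map_det (Int.castRingHom ℚ) (b.submatrix id I)).symm
    rw [this]; exact_mod_cast hdet
  have hrow : LinearIndependent ℚ M.row := by
    rw [Matrix.linearIndependent_rows_iff_isUnit, Matrix.isUnit_iff_isUnit_det]
    exact hM.isUnit
  apply LinearIndependent.of_comp (LinearMap.funLeft ℚ ℚ I)
  exact hrow

lemma W_of_li {j N : ℕ} (b : Matrix (Fin j) (Fin N) ℤ)
    (h : LinearIndependent ℚ (fun i => castQ (b i))) : W b ≠ 0 := by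
  let M : Matrix (Fin j) (Fin N) ℚ := b.map (Int.cast : ℤ → ℚ)
  have hr : M.rank = j := by
    have : LinearIndependent ℚ M.row := h
    simpa using this.rank_matrix
  obtain ⟨κ, a, ha, hsp, hli⟩ := exists_linearIndependent' ℚ M.col
  have : Finite κ := Finite.of_injective a ha
  have := Fintype.ofFinite κ
  have hc : Fintype.card κ = j := by
    rw [linearIndependent_iff_card_eq_finrank_span.mp hli, Set.finrank, hsp,
      ← Matrix.rank_eq_finrank_span_cols, hr]
  let e : Fin j ≃ κ := (Fintype.equivFinOfCardEq hc).symm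
  have hli2 : LinearIndependent ℚ (M.submatrix id (a ∘ e)).col := by
    exact hli.comp e e.injective
  rw [Matrix.linearIndependent_cols_iff_isUnit, Matrix.isUnit_iff_isUnit_det] at hli2
  have hne := hli2.ne_zero
  have : (M.submatrix id (a ∘ e)).det = (((b.submatrix id (a ∘ e)).det : ℤ) : ℚ) := by
    exact (RingHom.map_det (Int.castRingHom ℚ) (b.submatrix id (a ∘ e))).symm
  rw [this] at hne
  have h2 : (b.submatrix id (a ∘ e)).det ≠ 0 := by exact_mod_cast hne
  have := le_W b (a ∘ e)
  have : 0 < ((b.submatrix id (a ∘ e)).det).natAbs := Int.natAbs_pos.mpr h2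
  omega

lemma pigeon {j : ℕ} (M : Matrix (Fin j) (Fin j) ℤ) (hM : M.det ≠ 0) (m : ℕ)
    (hm : M.det.natAbs < (m + 1) ^ j) :
    ∃ a : Fin j → ℤ, Matrix.vecMul a M ≠ 0 ∧ ∀ k, |Matrix.vecMul a M k| ≤ m := by
  have hli : LinearIndependent ℤ M.row := by
    rw [LinearIndependent, ← LinearMap.ker_eq_bot]
    rw [LinearMap.ker_eq_bot']
    intro a ha
    have h1 : Matrix.vecMul (a : Fin j → ℤ) M = 0 := by
      rw [Matrix.vecMul_eq_sum]
      simp [Finsupp.linearCombination_apply, Finsupp.sum_fintype] at ha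
      simpa using! ha
    have := Matrix.eq_zero_of_vecMul_eq_zero hM h1
    ext i; exact congrFun this i
  let bN := Module.Basis.span hli
  have hcard := Submodule.natAbs_det_basis_change (Pi.basisFun ℤ (Fin j))
    (Submodule.span ℤ (Set.range M.row)) bN
  have hd : (Pi.basisFun ℤ (Fin j)).det ((↑) ∘ bN) = M.det := by
    rw [Module.Basis.det_apply, ← Matrix.det_transpose]
    congr 1
    ext i k
    simp [Module.Basis.toMatrix_apply, bN, Module.Basis.span_apply]
  rw [hd] at hcard
  have : Finite ((Fin j → ℤ) ⧸ Submodule.span ℤ (Set.range M.row)) := by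
    apply Nat.finite_of_card_ne_zero
    rw [← hcard]; simpa using hM
  have := Fintype.ofFinite ((Fin j → ℤ) ⧸ Submodule.span ℤ (Set.range M.row))
  let F : (Fin j → Fin (m+1)) → ((Fin j → ℤ) ⧸ Submodule.span ℤ (Set.range M.row)) :=
    fun z => Submodule.Quotient.mk (fun i => ((z i : ℕ) : ℤ))
  obtain ⟨z, z', hne, heq⟩ := Fintype.exists_ne_map_eq_of_card_lt F (by
    rw [← Nat.card_eq_fintype_card, ← hcard]
    simpa using hm)
  rw [Submodule.Quotient.eq, Submodule.mem_span_range_iff_exists_fun] at heq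
  obtain ⟨a, ha⟩ := heq
  have ha' : Matrix.vecMul a M = (fun i => ((z i : ℕ) : ℤ)) - (fun i => ((z' i : ℕ) : ℤ)) := by
    rw [← ha, Matrix.vecMul_eq_sum]; rfl
  refine ⟨a, ?_, ?_⟩
  · rw [ha']
    intro h0
    apply hne
    ext i
    have := congrFun h0 i
    simp at this
    omega
  · intro k
    rw [ha', abs_le]
    have h1 := (z k).2
    have h2 := (z' k).2
    simp only [Pi.sub_apply]
    constructor <;> omega

/-- `b` is a `ℤ`-basis of the integer points of `V`. -/
structure IsLat {N j : ℕ} (V : Submodule ℚ (Fin N → ℚ)) (b : Matrix (Fin j) (Fin N) ℤ) : Prop where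
  ne : W b ≠ 0
  mem : ∀ i, castQ (b i) ∈ V
  gen : ∀ q : Fin N → ℤ, castQ q ∈ V → ∃ c : Fin j → ℤ, q = Matrix.vecMul c b

lemma exists_den {N : ℕ} (v : Fin N → ℚ) : ∃ (D : ℤ) (q : Fin N → ℤ), D ≠ 0 ∧ castQ q = (D : ℚ) • v := by
  refine ⟨((∏ i, (v i).den : ℕ) : ℤ), fun i => (v i).num * ((∏ k ∈ Finset.univ.erase i, (v k).den : ℕ) : ℤ), ?_, ?_⟩
  · have : (∏ i, (v i).den : ℕ) ≠ 0 := Finset.prod_ne_zero_iff.mpr fun i _ => (v i).den_ne_zero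
    exact_mod_cast this
  · ext i
    have h := Finset.mul_prod_erase Finset.univ (fun k => (v k).den) (Finset.mem_univ i)
    have h2 := Rat.num_div_den (v i)
    have h3 : ((v i).den : ℚ) ≠ 0 := by exact_mod_cast (v i).den_ne_zero
    simp only [castQ, Pi.smul_apply, smul_eq_mul]
    rw [← h]
    push_cast
    nth_rw 3 [← h2]
    field_simp

lemma exists_isLat {N : ℕ} (V : Submodule ℚ (Fin N → ℚ)) :
    ∃ b : Matrix (Fin (Module.finrank ℚ V)) (Fin N) ℤ, IsLat V b := by
  let cl : (Fin N → ℤ) →ₗ[ℤ] (Fin N → ℚ) :=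
    { toFun := castQ
      map_add' := by intro x y; ext l; simp [castQ]
      map_smul' := by intro x y; ext l; simp [castQ] }
  let Δ : Submodule ℤ (Fin N → ℤ) := (V.restrictScalars ℤ).comap cl
  obtain ⟨k, bb⟩ := Submodule.basisOfPid (Pi.basisFun ℤ (Fin N)) Δ
  have hmem : ∀ i, castQ (bb i : Fin N → ℤ) ∈ V := fun i => (bb i).2
  let w : Fin k → V := fun i => ⟨castQ (bb i : Fin N → ℤ), hmem i⟩
  have hclinj : Function.Injective cl := by
    intro x y h
    ext l
    have := congrFun h l
    simpa [cl, castQ] using this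
  have hw : LinearIndependent ℚ w := by
    apply LinearIndependent.of_comp V.subtype
    rw [← LinearIndependent.iff_fractionRing ℤ ℚ]
    have h1 : LinearIndependent ℤ (fun i => (bb i : Fin N → ℤ)) :=
      bb.linearIndependent.map' Δ.subtype (Submodule.ker_subtype _)
    exact h1.map' cl (LinearMap.ker_eq_bot.mpr hclinj)
  have hgen : ∀ q : Fin N → ℤ, castQ q ∈ V → ∃ c : Fin k → ℤ, q = ∑ i, c i • (bb i : Fin N → ℤ) := by
    intro q hq
    refine ⟨fun i => bb.repr ⟨q, hq⟩ i, ?_⟩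
    have h := congrArg Δ.subtype (bb.sum_repr ⟨q, hq⟩)
    rw [map_sum] at h
    exact h.symm
  have hspan : ⊤ ≤ Submodule.span ℚ (Set.range w) := by
    rintro ⟨v, hv⟩ -
    obtain ⟨D, q, hD, hq⟩ := exists_den v
    obtain ⟨c, hc⟩ := hgen q (by rw [hq]; exact V.smul_mem _ hv)
    have hD' : (D : ℚ) ≠ 0 := by exact_mod_cast hD
    have : (⟨v, hv⟩ : V) = ∑ i, ((D : ℚ)⁻¹ * c i) • w i := by
      apply Subtype.ext
      have h1 : v = (D : ℚ)⁻¹ • castQ q := by rw [hq, smul_smul, inv_mul_cancel₀ hD', one_smul]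
      change v = V.subtype _
      rw [map_sum, h1, hc]
      ext l
      simp [castQ, w, Finset.sum_apply, Finset.mul_sum, mul_assoc]
    rw [this]
    exact Submodule.sum_mem _ fun i _ => Submodule.smul_mem _ _ (Submodule.subset_span ⟨i, rfl⟩)
  have hk : Module.finrank ℚ V = k := by
    rw [Module.finrank_eq_card_basis (Module.Basis.mk hw hspan)]; simp
  rw [hk]
  refine ⟨fun i => (bb i : Fin N → ℤ), ?_, hmem, ?_⟩
  · apply W_of_li
    exact hw.map' V.subtype (Submodule.ker_subtype _)
  · intro q hq
    obtain ⟨c, hc⟩ := hgen q hq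
    refine ⟨c, ?_⟩
    rw [hc]
    exact (Matrix.vecMul_eq_sum c (Matrix.of fun i => (bb i : Fin N → ℤ))).symm

/-- A chosen basis. -/
noncomputable def latB {N : ℕ} (V : Submodule ℚ (Fin N → ℚ)) :
    Matrix (Fin (Module.finrank ℚ V)) (Fin N) ℤ := (exists_isLat V).choose

lemma latB_isLat {N : ℕ} (V : Submodule ℚ (Fin N → ℚ)) : IsLat V (latB V) :=
  (exists_isLat V).choose_spec


/-- The linear form. -/
noncomputable def lf {N : ℕ} (q : Fin N → ℤ) (y : Fin N → ℚ_[p]) : ℚ_[p] := ∑ l, (q l : ℚ_[p]) * y l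

lemma lf_vecMul {j N : ℕ} (c : Fin j → ℤ) (b : Matrix (Fin j) (Fin N) ℤ) (y : Fin N → ℚ_[p]) :
    lf p (Matrix.vecMul c b) y = ∑ i, (c i : ℚ_[p]) * lf p (b i) y := by
  simp only [lf, Matrix.vecMul, dotProduct, Finset.mul_sum]
  rw [Finset.sum_comm]
  apply Finset.sum_congr rfl
  intro l _
  push_cast
  rw [Finset.sum_mul]
  exact Finset.sum_congr rfl fun i _ => by ring

/-- The size of the forms of a basis. -/
noncomputable def tau {j N : ℕ} (b : Matrix (Fin j) (Fin N) ℤ) (y : Fin N → ℚ_[p]) : ℝ :=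
  ‖fun i => lf p (b i) y‖

/-- The covolume function. -/
noncomputable def hcov {N : ℕ} (t : ℕ) (V : Submodule ℚ (Fin N → ℚ)) (y : Fin N → ℚ_[p]) : ℝ :=
  (W (latB V) : ℝ) * max 1 ((p : ℝ) ^ t * tau p (latB V) y)

lemma one_le_abs_mul_norm (z : ℤ) (hz : z ≠ 0) : 1 ≤ (z.natAbs : ℝ) * ‖(z : ℚ_[p])‖ := by
  have hz' : (z : ℚ_[p]) ≠ 0 := by exact_mod_cast hz
  have hp : (1 : ℝ) < p := by exact_mod_cast (Fact.out : p.Prime).one_lt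
  obtain ⟨n, hn⟩ : ∃ n : ℕ, ‖(z : ℚ_[p])‖ = (p : ℝ) ^ (-(n : ℤ)) := by
    rw [Padic.norm_eq_zpow_neg_valuation hz']
    refine ⟨(z : ℚ_[p]).valuation.toNat, ?_⟩
    rw [Int.toNat_of_nonneg]
    rw [Padic.valuation_intCast]
    positivity
  have h1 : ((p ^ n : ℕ) : ℤ) ∣ z := by
    have := (Padic.norm_int_le_pow_iff_dvd (p := p) z n).mp (le_of_eq hn)
    exact_mod_cast this
  have h2 : p ^ n ≤ z.natAbs := Nat.le_of_dvd (Int.natAbs_pos.mpr hz) (Int.natCast_dvd.mp h1)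
  have h3 : (p : ℝ) ^ n ≤ z.natAbs := by exact_mod_cast h2
  rw [hn, zpow_neg, zpow_natCast]
  have : (0:ℝ) < (p : ℝ) ^ n := by positivity
  rw [← div_eq_mul_inv, le_div_iff₀ this]
  linarith

lemma hcov_le {N : ℕ} (t : ℕ) (V : Submodule ℚ (Fin N → ℚ)) (y : Fin N → ℚ_[p]) (j : ℕ)
    (hj : j = Module.finrank ℚ V) (b : Matrix (Fin j) (Fin N) ℤ) (hb : W b ≠ 0)
    (hmem : ∀ i, castQ (b i) ∈ V) (hy : ∀ i, (p : ℝ) ^ t * ‖lf p (b i) y‖ ≤ 1) :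
    hcov p t V y ≤ W b := by
  subst hj
  have hL := latB_isLat V
  choose A hA using fun i => hL.gen (b i) (hmem i)
  have hb' : b = (Matrix.of A) * latB V := by
    ext i k
    rw [hA i]; rfl
  have hW := W_mul (Matrix.of A) (latB V)
  rw [← hb'] at hW
  have hdet : (Matrix.of A).det ≠ 0 := by
    intro h0; rw [h0] at hW; simp at hW; exact hb hW
  have hp : (0 : ℝ) < p := by exact_mod_cast (Fact.out : p.Prime).pos
  set d := (Matrix.of A).det with hd
  rw [hW, hcov]
  push_cast
  rw [mul_comm]
  gcongr
  apply max_le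
  · exact_mod_cast Int.natAbs_pos.mpr hdet
  -- det A * (lf of basis) is small
  have h1 : ∀ k, (p:ℝ) ^ t * (‖(d : ℚ_[p])‖ * ‖lf p (latB V k) y‖) ≤ 1 := by
    intro k
    have e1 : (d : ℚ_[p]) * lf p (latB V k) y
        = ∑ i, (((Matrix.of A).adjugate k i : ℤ) : ℚ_[p]) * lf p (b i) y := by
      rw [← lf_vecMul]
      have : Matrix.vecMul ((Matrix.of A).adjugate k) b = fun l => d * latB V k l := by
        have h3 : (Matrix.of A).adjugate * b = d • latB V := by
          rw [hb', ← Matrix.mul_assoc, Matrix.adjugate_mul, Matrix.smul_mul, Matrix.one_mul]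
        have := congrFun h3 k
        ext l
        exact congrFun this l
      rw [this]
      simp only [lf]
      rw [Finset.mul_sum]
      exact Finset.sum_congr rfl fun l _ => by push_cast; ring
    rw [← norm_mul, e1]
    have hpt : (0:ℝ) < (p:ℝ)^t := by positivity
    rw [← le_div_iff₀' hpt]
    apply IsUltrametricDist.norm_sum_le_of_forall_le_of_nonneg (by positivity)
    intro i _
    rw [norm_mul, le_div_iff₀' hpt]
    calc _ = ‖(((Matrix.of A).adjugate k i : ℤ) : ℚ_[p])‖ * ((p:ℝ)^t * ‖lf p (b i) y‖) := by ring
      _ ≤ 1 * 1 := mul_le_mul (Padic.norm_int_le_one _) (hy i) (by positivity) zero_le_one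
      _ = 1 := one_mul _
  have h2 := one_le_abs_mul_norm p d hdet
  have hdn : 0 < ‖(d : ℚ_[p])‖ := by
    rw [norm_pos_iff]; exact_mod_cast hdet
  have hpt : (0:ℝ) < (p:ℝ)^t := by positivity
  rw [← le_div_iff₀' hpt]
  unfold tau
  rw [pi_norm_le_iff_of_nonneg (by positivity)]
  intro k
  rw [le_div_iff₀' hpt]
  have h3 := h1 k
  nlinarith [norm_nonneg (lf p (latB V k) y), mul_nonneg hpt.le (norm_nonneg (lf p (latB V k) y))]

lemma castQ_vecMul_mem {j N : ℕ} (V : Submodule ℚ (Fin N → ℚ)) (c : Fin j → ℤ)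
    (b : Matrix (Fin j) (Fin N) ℤ) (h : ∀ i, castQ (b i) ∈ V) : castQ (Matrix.vecMul c b) ∈ V := by
  have : castQ (Matrix.vecMul c b) = ∑ i, (c i : ℚ) • castQ (b i) := by
    ext l
    simp [castQ, Matrix.vecMul, dotProduct, Finset.sum_apply]
  rw [this]
  exact V.sum_mem fun i _ => V.smul_mem _ (h i)

lemma exists_int_near (r : ℚ_[p]) (hr : ‖r‖ ≤ 1) (e : ℕ) :
    ∃ c : ℤ, ‖r - c‖ ≤ (p : ℝ) ^ (-(e : ℤ)) := by
  let r' : ℤ_[p] := ⟨r, hr⟩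
  refine ⟨(r'.appr e : ℕ), ?_⟩
  have h := PadicInt.appr_spec e r'
  rw [← PadicInt.norm_le_pow_iff_mem_span_pow] at h
  have h2 : ‖((r' - (r'.appr e : ℕ) : ℤ_[p]) : ℚ_[p])‖ ≤ (p : ℝ) ^ (-(e : ℤ)) := by
    rw [← PadicInt.norm_def]; exact h
  simpa using h2

lemma up {N : ℕ} (t : ℕ) (V : Submodule ℚ (Fin N → ℚ)) (y : Fin N → ℚ_[p]) :
    ∃ b : Matrix (Fin (Module.finrank ℚ V)) (Fin N) ℤ, W b ≠ 0 ∧ (∀ i, castQ (b i) ∈ V) ∧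
      (∀ i, (p : ℝ) ^ t * ‖lf p (b i) y‖ ≤ 1) ∧ (W b : ℝ) ≤ hcov p t V y := by
  have hL := latB_isLat V
  set b := latB V with hb
  have hp : (1 : ℝ) < p := by exact_mod_cast (Fact.out : p.Prime).one_lt
  have hp0 : (0 : ℝ) < p := by linarith
  have hpt : (0:ℝ) < (p:ℝ)^t := by positivity
  have hle : ∀ i, ‖lf p (b i) y‖ ≤ tau p b y := fun i => norm_le_pi_norm (fun i => lf p (b i) y) i
  by_cases hc : (p : ℝ) ^ t * tau p b y ≤ 1
  · refine ⟨b, hL.ne, hL.mem, fun i => le_trans (by gcongr; exact hle i) hc, ?_⟩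
    rw [hcov, ← hb]
    have : (1:ℝ) ≤ max 1 ((p : ℝ) ^ t * tau p b y) := le_max_left _ _
    nlinarith [(Nat.cast_nonneg (W b) : (0:ℝ) ≤ W b)]
  push Not at hc
  have htau : 0 < tau p b y := by
    by_contra h
    push Not at h
    nlinarith
  obtain ⟨k, hk⟩ : ∃ k, ‖lf p (b k) y‖ = tau p b y := by
    by_contra h
    push Not at h
    have : tau p b y < tau p b y := by
      conv_lhs => unfold tau
      rw [pi_norm_lt_iff htau]
      exact fun i => lt_of_le_of_ne (hle i) (h i)
    exact lt_irrefl _ this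
  have hk0 : lf p (b k) y ≠ 0 := by rw [← norm_pos_iff, hk]; exact htau
  set s := (lf p (b k) y).valuation with hs
  have hks : tau p b y = (p:ℝ) ^ (-s) := by rw [← hk, Padic.norm_eq_zpow_neg_valuation hk0]
  have hst : s < t := by
    rw [hks, ← zpow_natCast, ← zpow_add₀ hp0.ne', one_lt_zpow_iff_right₀ hp] at hc
    linarith
  obtain ⟨e, he⟩ := Int.eq_ofNat_of_zero_le (show 0 ≤ (t:ℤ) - s by linarith)
  have hc' : ∀ i, ∃ c : ℤ, ‖lf p (b i) y / lf p (b k) y - c‖ ≤ (p : ℝ) ^ (-(e : ℤ)) := by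
    intro i
    apply exists_int_near
    rw [norm_div, hk]
    exact div_le_one_of_le₀ (hle i) htau.le
  choose c hc1 using hc'
  let u : Fin (Module.finrank ℚ V) → ℤ := fun i => if i = k then (p:ℤ)^e else - c i
  let A : Matrix (Fin (Module.finrank ℚ V)) (Fin (Module.finrank ℚ V)) ℤ := Matrix.updateCol 1 k u
  have hdet : A.det = (p:ℤ)^e := by
    have : Matrix.cramer 1 u k = A.det := Matrix.cramer_apply 1 u k
    rw [← this, Matrix.cramer_one]
    simp [u]
  have hWA := W_mul A b
  rw [hdet] at hWA
  have hpp : p ≠ 0 := (Fact.out : p.Prime).ne_zero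
  have hsc : ∀ x : ℝ, x ≤ (p:ℝ) ^ (-(e:ℤ)) * (p:ℝ)^(-s) → (p:ℝ)^t * x ≤ 1 := by
    intro x hx
    calc (p:ℝ)^t * x ≤ (p:ℝ)^t * ((p:ℝ) ^ (-(e:ℤ)) * (p:ℝ)^(-s)) := by gcongr
      _ = 1 := by
        rw [← zpow_natCast, ← zpow_add₀ hp0.ne', ← zpow_add₀ hp0.ne']
        have : (t:ℤ) + (-(e:ℤ) + -s) = 0 := by linarith
        rw [this, zpow_zero]
  refine ⟨A * b, ?_, ?_, ?_, ?_⟩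
  · rw [hWA]
    exact mul_ne_zero (by simp [hpp]) hL.ne
  · intro i
    exact castQ_vecMul_mem V (A i) b hL.mem
  · intro i
    have e1 : lf p ((A * b) i) y = ∑ l, (A i l : ℚ_[p]) * lf p (b l) y := lf_vecMul p (A i) b y
    rw [e1]
    apply hsc
    by_cases hik : i = k
    · subst hik
      rw [Finset.sum_eq_single i]
      · simp only [A, u, Matrix.updateCol_self, if_true]
        push_cast
        rw [norm_mul, hk, hks, norm_pow, Padic.norm_p, inv_pow, zpow_neg (p:ℝ) (e:ℤ), zpow_natCast]
      · intro l _ hl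
        simp [A, Matrix.updateCol_ne hl, Matrix.one_apply_ne hl.symm]
      · simp
    · rw [Fintype.sum_eq_add i k hik]
      · simp only [A, u, Matrix.updateCol_self, Matrix.updateCol_ne hik, Matrix.one_apply_eq, if_neg hik]
        push_cast
        have : (1:ℚ_[p]) * lf p (b i) y + -(c i : ℚ_[p]) * lf p (b k) y
          = (lf p (b i) y / lf p (b k) y - c i) * lf p (b k) y := by
            field_simp
            ring
        rw [this, norm_mul, hk, hks]
        gcongr
        exact hc1 i
      · rintro l ⟨hl, hl2⟩
        simp [A, Matrix.updateCol_ne hl2, Matrix.one_apply_ne hl.symm]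
  · rw [hWA, hcov, ← hb]
    have h3 : (p:ℝ)^e ≤ max 1 ((p : ℝ) ^ t * tau p b y) := by
      apply le_max_of_le_right
      rw [hks, ← zpow_natCast, ← zpow_natCast, ← zpow_add₀ hp0.ne']
      apply le_of_eq
      congr 1
      linarith
    have h4 : ((p:ℤ)^e).natAbs = p^e := by rw [Int.natAbs_pow]; simp
    rw [h4]
    push_cast
    nlinarith [(Nat.cast_nonneg (W b) : (0:ℝ) ≤ W b)]

lemma hcov_bot {N : ℕ} (t : ℕ) (y : Fin N → ℚ_[p]) : hcov p t (⊥ : Submodule ℚ (Fin N → ℚ)) y ≤ 1 := by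
  have := hcov_le p t (⊥ : Submodule ℚ (Fin N → ℚ)) y 0 (by simp) (Matrix.of ![]) (by simp [W]) (by simp) (by simp)
  refine this.trans ?_
  simp [W]

lemma F2 {N : ℕ} (t : ℕ) (V : Submodule ℚ (Fin N → ℚ)) (y : Fin N → ℚ_[p]) (q : Fin N → ℤ)
    (hq : castQ q ∉ V) (hqy : (p : ℝ) ^ t * ‖lf p q y‖ ≤ 1) (B : ℝ) (hB : ∀ l, |(q l : ℝ)| ≤ B) :
    hcov p t (V ⊔ Submodule.span ℚ {castQ q}) y ≤ N * B * hcov p t V y := by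
  obtain ⟨b, hb1, hb2, hb3, hb4⟩ := up p t V y
  let b' : Matrix (Fin (Module.finrank ℚ V + 1)) (Fin N) ℤ := Matrix.of (Fin.cons q b)
  have hW : W b' ≠ 0 := by
    apply W_of_li
    have h1 : (fun i => castQ (b' i)) = Fin.cons (castQ q) (fun i => castQ (b i)) := by
      funext i
      refine Fin.cases ?_ (fun i => ?_) i <;> rfl
    rw [h1, linearIndependent_finCons]
    refine ⟨li_of_W b hb1, fun h => hq ?_⟩
    refine Submodule.span_le.mpr ?_ h
    rintro _ ⟨i, rfl⟩
    exact hb2 i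
  have hB0 : 0 ≤ B := by
    rcases Nat.eq_zero_or_pos N with h | h
    · subst h
      exact absurd (by rw [Subsingleton.elim (castQ q) 0]; exact V.zero_mem) hq
    · exact (abs_nonneg _).trans (hB ⟨0, h⟩)
  have h1 := hcov_le p t (V ⊔ Submodule.span ℚ {castQ q}) y (Module.finrank ℚ V + 1)
    (by rw [Submodule.finrank_sup_span_singleton hq]) b' hW
    (by
      intro i
      refine Fin.cases ?_ (fun i => ?_) i
      · exact Submodule.mem_sup_right (Submodule.mem_span_singleton_self _)
      · exact Submodule.mem_sup_left (hb2 i))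
    (by
      intro i
      refine Fin.cases ?_ (fun i => ?_) i
      · exact hqy
      · exact hb3 i)
  refine h1.trans ?_
  obtain ⟨I, hI⟩ := exists_W b' hW
  rw [← hI]
  have h2 : ((((b'.submatrix id I).det).natAbs : ℕ) : ℝ) ≤ (Module.finrank ℚ V + 1 : ℕ) * (B * W b) := by
    rw [Nat.cast_natAbs, Matrix.det_succ_row_zero]
    push_cast
    refine (Finset.abs_sum_le_sum_abs _ _).trans ?_
    refine (Finset.sum_le_card_nsmul _ _ (B * W b) ?_).trans (by simp)
    intro l _
    rw [abs_mul, abs_mul, abs_pow, abs_neg, abs_one, one_pow, one_mul]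
    gcongr
    · exact hB _
    · have := le_W b (fun i => I (l.succAbove i))
      have h5 : (((b.submatrix id fun i => I (l.succAbove i)).det).natAbs : ℝ) ≤ W b := by exact_mod_cast this
      rw [Nat.cast_natAbs] at h5
      have h6 : ((b'.submatrix id I).submatrix Fin.succ l.succAbove) = (b.submatrix id fun i => I (l.succAbove i)) := by
        ext i k; rfl
      rw [h6]
      exact_mod_cast h5
  refine h2.trans ?_
  have h7 : Module.finrank ℚ V + 1 ≤ N := by
    rw [← Submodule.finrank_sup_span_singleton hq]
    exact (Submodule.finrank_le _).trans (by simp)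
  have h7' : ((Module.finrank ℚ V + 1 : ℕ) : ℝ) ≤ N := by exact_mod_cast h7
  have h8 : B * W b ≤ B * hcov p t V y := by gcongr
  have h9 : 0 ≤ B * (W b : ℝ) := by positivity
  calc _ ≤ (N:ℝ) * (B * hcov p t V y) := by gcongr
    _ = _ := by ring

lemma F3 {N : ℕ} (hN : 0 < N) (t : ℕ) (V : Submodule ℚ (Fin N → ℚ)) (y : Fin N → ℚ_[p]) (lam : ℝ) (hl : 0 < lam)
    (h : ∀ q : Fin N → ℤ, q ≠ 0 → (p : ℝ) ^ t * ‖lf p q y‖ ≤ 1 → ∃ l, lam ≤ |(q l : ℝ)|) :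
    (lam / N) ^ (Module.finrank ℚ V) ≤ hcov p t V y := by
  obtain ⟨b, hb1, hb2, hb3, hb4⟩ := up p t V y
  refine le_trans ?_ hb4
  rcases Nat.eq_zero_or_pos (Module.finrank ℚ V) with h0 | h0
  · have : (lam / N) ^ (Module.finrank ℚ V) = 1 := by rw [h0, pow_zero]
    rw [this]
    exact_mod_cast Nat.one_le_iff_ne_zero.mpr hb1
  have hjN : Module.finrank ℚ V ≤ N := (Submodule.finrank_le _).trans (by simp)
  generalize Module.finrank ℚ V = j at *
  obtain ⟨I, hI⟩ := exists_W b hb1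
  set M := b.submatrix id I with hM
  have hdet : M.det ≠ 0 := by
    intro h0; rw [h0] at hI; exact hb1 (by simpa using hI.symm)
  obtain ⟨m, hm1, hm2⟩ : ∃ m : ℕ, m ^ j ≤ W b ∧ W b < (m+1)^j := by
    have hex : ∃ m : ℕ, W b < (m+1)^j := ⟨W b, lt_of_lt_of_le (Nat.lt_succ_self _) (Nat.le_self_pow h0.ne' _)⟩
    refine ⟨Nat.find hex, ?_, Nat.find_spec hex⟩
    rcases hm : Nat.find hex with _ | m
    · simp [h0.ne']
    · have := Nat.find_min hex (m := m) (by omega)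
      omega
  obtain ⟨a, ha1, ha2⟩ := pigeon M hdet m (by rw [hI]; exact hm2)
  set q := Matrix.vecMul a b with hq
  have hqM : Matrix.vecMul a M = fun k => q (I k) := by
    ext k; rfl
  have hq0 : q ≠ 0 := by
    intro h; apply ha1; rw [hqM, h]; rfl
  obtain ⟨l, hlq⟩ := h q hq0 (by
    rw [hq, lf_vecMul]
    have hpt : (0:ℝ) < (p:ℝ)^t := by have := (Fact.out : p.Prime).pos; positivity
    rw [← le_div_iff₀' hpt]
    apply IsUltrametricDist.norm_sum_le_of_forall_le_of_nonneg (by positivity)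
    intro i _
    rw [norm_mul, le_div_iff₀' hpt]
    calc _ = ‖((a i : ℤ) : ℚ_[p])‖ * ((p:ℝ)^t * ‖lf p (b i) y‖) := by ring
      _ ≤ 1 * 1 := mul_le_mul (Padic.norm_int_le_one _) (hb3 i) (by positivity) zero_le_one
      _ = 1 := one_mul _)
  -- bound of q l
  have key : M.det * q l = ∑ k, q (I k) * Matrix.cramer M (fun i => b i l) k := by
    have h1 := Matrix.mulVec_cramer M (fun i => b i l)
    have h2 : dotProduct a (M.mulVec (Matrix.cramer M (fun i => b i l))) = M.det * q l := by
      rw [h1, dotProduct_smul, smul_eq_mul]; rfl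
    rw [← h2, Matrix.dotProduct_mulVec, hqM]; rfl
  have hcr : ∀ k, |((Matrix.cramer M (fun i => b i l) k : ℤ) : ℝ)| ≤ W b := by
    intro k
    have h1 := le_W b (Function.update I k l)
    have h2 : (b.submatrix id (Function.update I k l)) = M.updateCol k (fun i => b i l) := by
      ext i r
      by_cases hr : r = k
      · subst hr; simp
      · simp [Matrix.updateCol_ne hr, Function.update_of_ne hr, hM]
    rw [h2, ← Matrix.cramer_apply] at h1
    have h3 : (((Matrix.cramer M (fun i => b i l) k).natAbs : ℕ) : ℝ) ≤ W b := by exact_mod_cast h1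
    rwa [Nat.cast_natAbs, Int.cast_abs] at h3
  have hWpos : (0:ℝ) < W b := by exact_mod_cast Nat.pos_of_ne_zero hb1
  have hdetR : |(M.det : ℝ)| = W b := by
    rw [← hI, Nat.cast_natAbs, Int.cast_abs]
  have hqm : ∀ k, |(q (I k) : ℝ)| ≤ m := by
    intro k
    have := ha2 k
    rw [hqM] at this
    exact_mod_cast this
  have h5 : (W b : ℝ) * |(q l : ℝ)| ≤ j * (m * W b) := by
    rw [← hdetR, ← abs_mul, hdetR]
    have : ((M.det : ℝ) * (q l : ℝ)) = ∑ k, (q (I k) : ℝ) * ((Matrix.cramer M (fun i => b i l) k : ℤ) : ℝ) := by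
      exact_mod_cast key
    rw [this]
    refine (Finset.abs_sum_le_sum_abs _ _).trans ?_
    refine (Finset.sum_le_card_nsmul _ _ ((m:ℝ) * W b) ?_).trans (by simp)
    intro k _
    rw [abs_mul]
    exact mul_le_mul (hqm k) (hcr k) (abs_nonneg _) (by positivity)
  have h6 : |(q l : ℝ)| ≤ j * m := by
    have : (W b : ℝ) * |(q l : ℝ)| ≤ (W b : ℝ) * (j * m) := by linarith
    exact le_of_mul_le_mul_left this hWpos
  have hN' : (0:ℝ) < N := by exact_mod_cast hN
  have hjN' : (j:ℝ) ≤ N := by exact_mod_cast hjN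
  have h7 : lam / N ≤ m := by
    rw [div_le_iff₀ hN']
    nlinarith [(Nat.cast_nonneg m : (0:ℝ) ≤ m)]
  calc (lam / N)^j ≤ (m:ℝ)^j := by gcongr
    _ ≤ W b := by exact_mod_cast hm1

/-- Balls of radius `p^{-k}`. -/
def cb {X : Type*} [PseudoMetricSpace X] (x : X) (k : ℕ) : Set X := closedBall x ((p : ℝ) ^ (-(k : ℤ)))

lemma rad_pos (k : ℕ) : (0 : ℝ) < (p : ℝ) ^ (-(k : ℤ)) := by
  have := (Fact.out : p.Prime).pos
  positivity

section
variable {X : Type*} [MetricSpace X] [IsUltrametricDist X]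

lemma mem_cb_self (x : X) (k : ℕ) : x ∈ cb p x k := mem_closedBall_self (rad_pos p k).le

lemma cb_open (x : X) (k : ℕ) : IsOpen (cb p x k) :=
  IsUltrametricDist.isOpen_closedBall _ (rad_pos p k).ne'

lemma cb_mono (x : X) {k l : ℕ} (h : k ≤ l) : cb p x l ⊆ cb p x k := by
  apply closedBall_subset_closedBall
  have : (1:ℝ) ≤ p := by exact_mod_cast (Fact.out : p.Prime).one_le
  gcongr

lemma cb_eq {x y : X} {k : ℕ} (h : y ∈ cb p x k) : cb p y k = cb p x k :=
  (IsUltrametricDist.closedBall_eq_of_mem h).symm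

lemma cb_sub {x y : X} {k l : ℕ} (h : y ∈ cb p x k) (hkl : k ≤ l) : cb p y l ⊆ cb p x k :=
  (cb_mono p y hkl).trans (cb_eq p h).subset

variable [MeasurableSpace X] [BorelSpace X] [SecondCountableTopology X]

lemma vit (μ : Measure X) (Z O : Set X) (c : ℝ≥0∞)
    (h : ∀ x ∈ Z, ∃ k, cb p x k ⊆ O ∧ μ (Z ∩ cb p x k) ≤ c * μ (cb p x k)) : μ Z ≤ c * μ O := by
  classical
  let kf : Z → ℕ := fun x => Nat.find (h x x.2)
  have hk : ∀ x : Z, cb p (x:X) (kf x) ⊆ O ∧ μ (Z ∩ cb p (x:X) (kf x)) ≤ c * μ (cb p (x:X) (kf x)) :=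
    fun x => Nat.find_spec (h x x.2)
  let F : Set (Set X) := Set.range (fun x : Z => cb p (x:X) (kf x))
  have key : ∀ x y : Z, kf x ≤ kf y → ¬ Disjoint (cb p (x:X) (kf x)) (cb p (y:X) (kf y)) →
      cb p (x:X) (kf x) = cb p (y:X) (kf y) := by
    intro x y hxy hd
    obtain ⟨z, hz1, hz2⟩ := Set.not_disjoint_iff.mp hd
    have e1 : cb p (y:X) (kf x) = cb p (x:X) (kf x) := by
      rw [← cb_eq p hz1]
      exact (cb_eq p (cb_mono p (y:X) hxy hz2)).symm
    have : kf y ≤ kf x := by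
      apply Nat.find_min' (h y y.2)
      rw [e1]
      exact hk x
    have h2 : kf x = kf y := le_antisymm hxy this
    rw [← e1, h2]
  have hdisj : F.PairwiseDisjoint id := by
    rintro _ ⟨x, rfl⟩ _ ⟨y, rfl⟩ hne
    by_contra hd
    rcases le_total (kf x) (kf y) with h1 | h1
    · exact hne (key x y h1 hd)
    · exact hne (key y x h1 (fun h => hd h.symm)).symm
  have hcount : F.Countable := by
    apply hdisj.countable_of_isOpen
    · rintro _ ⟨x, rfl⟩; exact cb_open p _ _
    · rintro _ ⟨x, rfl⟩; exact ⟨x, mem_cb_self p _ _⟩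
  have hcov : Z ⊆ ⋃ B ∈ F, Z ∩ B := by
    intro x hx
    simp only [Set.mem_iUnion]
    exact ⟨_, ⟨⟨x, hx⟩, rfl⟩, hx, mem_cb_self p _ _⟩
  have : Countable F := hcount
  calc μ Z ≤ μ (⋃ B ∈ F, Z ∩ B) := measure_mono hcov
    _ ≤ ∑' B : F, μ (Z ∩ B) := measure_biUnion_le μ hcount _
    _ ≤ ∑' B : F, c * μ B := by
      apply ENNReal.tsum_le_tsum
      rintro ⟨_, ⟨x, rfl⟩⟩
      exact (hk x).2
    _ = c * ∑' B : F, μ B := ENNReal.tsum_mul_left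
    _ = c * μ (⋃ B ∈ F, id B) := by
      rw [measure_biUnion hcount hdisj]
      · rfl
      · rintro _ ⟨x, rfl⟩; exact (cb_open p _ _).measurableSet
    _ ≤ c * μ O := by
      gcongr
      simp only [Set.iUnion_subset_iff]
      rintro _ ⟨x, rfl⟩
      exact (hk x).1
end

lemma cb_scale {d : ℕ} (y : Fin d → ℚ_[p]) (k l : ℕ) (x : Fin d → ℚ_[p])
    (hy : y ∈ cb p x l) : ((p:ℚ_[p])^k • y) ∈ cb p ((p:ℚ_[p])^k • x) (k+l) := by
  rw [cb, mem_closedBall, dist_eq_norm, ← smul_sub, norm_smul, norm_pow, Padic.norm_p] at *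
  have h0 : (p:ℝ) ≠ 0 := by exact_mod_cast (Fact.out : p.Prime).ne_zero
  push_cast
  rw [neg_add, zpow_add₀ h0, zpow_neg, zpow_natCast, inv_pow]
  gcongr

lemma haar_doubling {d : ℕ} (μ : Measure (Fin d → ℚ_[p])) [μ.IsAddHaarMeasure] :
    ∃ D : ℕ, 1 ≤ D ∧ ∀ x k, μ (cb p x k) ≤ D * μ (cb p x (k+1)) := by
  classical
  obtain ⟨F, hF⟩ : ∃ F : Finset (Fin d → ℚ_[p]), cb p (0 : Fin d → ℚ_[p]) 0 ⊆ ⋃ x ∈ F, cb p x 1 := by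
    obtain ⟨F, -, hF⟩ := (isCompact_closedBall (0 : Fin d → ℚ_[p]) ((p:ℝ)^(-((0:ℕ):ℤ)))).elim_nhds_subcover
      (fun x => cb p x 1) (fun x _ => (cb_open p x 1).mem_nhds (mem_cb_self p x 1))
    exact ⟨F, hF⟩
  have htr : ∀ (x : Fin d → ℚ_[p]) k, μ (cb p x k) = μ (cb p 0 k) := by
    intro x k
    rw [cb, ← measure_preimage_add μ x (closedBall x _)]
    simp [cb]
  refine ⟨F.card + 1, by omega, fun x k => ?_⟩
  have hp0 : (p:ℚ_[p])^k ≠ 0 := pow_ne_zero _ (by exact_mod_cast (Fact.out : p.Prime).ne_zero)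
  have hcov : cb p (0 : Fin d → ℚ_[p]) k ⊆ ⋃ x ∈ F, cb p ((p:ℚ_[p])^k • x) (k+1) := by
    intro y hy
    have hy' : ((p:ℚ_[p])^k)⁻¹ • y ∈ cb p (0 : Fin d → ℚ_[p]) 0 := by
      rw [cb, mem_closedBall, dist_zero_right] at *
      rw [norm_smul, norm_inv, norm_pow, Padic.norm_p]
      have h0 : (0:ℝ) < p := by exact_mod_cast (Fact.out : p.Prime).pos
      rw [zpow_neg, zpow_natCast] at hy
      simp only [inv_pow, inv_inv]
      calc (p:ℝ)^k * ‖y‖ ≤ (p:ℝ)^k * ((p:ℝ)^k)⁻¹ := by gcongr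
        _ = _ := by simp [h0.ne']
    have := hF hy'
    simp only [Set.mem_iUnion] at this ⊢
    obtain ⟨x, hx, h⟩ := this
    refine ⟨x, hx, ?_⟩
    have := cb_scale p _ k 1 _ h
    rwa [smul_smul, mul_inv_cancel₀ hp0, one_smul] at this
  rw [htr, htr x (k+1)]
  calc μ (cb p 0 k) ≤ μ (⋃ x ∈ F, cb p ((p:ℚ_[p])^k • x) (k+1)) := measure_mono hcov
    _ ≤ ∑ x ∈ F, μ (cb p ((p:ℚ_[p])^k • x) (k+1)) := measure_biUnion_finset_le _ _
    _ = F.card * μ (cb p 0 (k+1)) := by simp [htr]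
    _ ≤ _ := by gcongr; simp

lemma hasSum_norm_le (u : ℕ → ℚ_[p]) (s : ℚ_[p]) (h : HasSum u s) (B : ℝ) (hB0 : 0 ≤ B)
    (hB : ∀ k, ‖u k‖ ≤ B) : ‖s‖ ≤ B := by
  have h1 : s ∈ closedBall (0:ℚ_[p]) B := by
    refine isClosed_closedBall.mem_of_tendsto h (Filter.Eventually.of_forall fun F => ?_)
    rw [mem_closedBall, dist_zero_right]
    exact IsUltrametricDist.norm_sum_le_of_forall_le_of_nonneg hB0 fun i _ => hB i
  simpa using h1

lemma nsub_le_max (a b : ℚ_[p]) : ‖a - b‖ ≤ max ‖a‖ ‖b‖ := by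
  have := IsUltrametricDist.norm_add_le_max a (-b)
  rwa [norm_neg, ← sub_eq_add_neg] at this

lemma vander (m : ℕ) : ∃ C : ℝ, 1 ≤ C ∧ ∀ (c : ℕ → ℚ_[p]) (M : ℝ), 0 ≤ M →
    (∀ i : ℕ, ‖∑ k ∈ Finset.range (m+1), ((p:ℚ_[p]) * i)^k * c k‖ ≤ M) → ∀ k ≤ m, ‖c k‖ ≤ C * M := by
  let V : Matrix (Fin (m+1)) (Fin (m+1)) ℚ_[p] := Matrix.vandermonde (fun i => (p:ℚ_[p]) * ((i:ℕ):ℚ_[p]))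
  have hp : (p:ℚ_[p]) ≠ 0 := by exact_mod_cast (Fact.out : p.Prime).ne_zero
  have hV : IsUnit V.det := by
    rw [isUnit_iff_ne_zero, Matrix.det_vandermonde_ne_zero_iff]
    intro i j hij
    have := mul_left_cancel₀ hp hij
    exact Fin.ext (by exact_mod_cast this)
  refine ⟨1 + ∑ k, ∑ i, ‖V⁻¹ k i‖, by
    have : 0 ≤ ∑ k, ∑ i, ‖V⁻¹ k i‖ := Finset.sum_nonneg fun _ _ => Finset.sum_nonneg fun _ _ => norm_nonneg _
    linarith, ?_⟩
  intro c M hM0 hM k hk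
  let c' : Fin (m+1) → ℚ_[p] := fun k => c k
  have h1 : V⁻¹.mulVec (V.mulVec c') = c' := by
    rw [Matrix.mulVec_mulVec, Matrix.nonsing_inv_mul _ hV, Matrix.one_mulVec]
  have h2 : ∀ i, ‖V.mulVec c' i‖ ≤ M := by
    intro i
    have := hM i
    rw [Finset.sum_range] at this
    exact this
  let k' : Fin (m+1) := ⟨k, by omega⟩
  have h3 : c k = c' k' := rfl
  rw [h3, ← h1, Matrix.mulVec, dotProduct]
  refine IsUltrametricDist.norm_sum_le_of_forall_le_of_nonneg (by positivity) fun i _ => ?_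
  rw [norm_mul]
  gcongr
  · have a1 : ‖V⁻¹ k' i‖ ≤ ∑ i, ‖V⁻¹ k' i‖ :=
      Finset.single_le_sum (f := fun i => ‖V⁻¹ k' i‖) (fun _ _ => norm_nonneg _) (Finset.mem_univ i)
    have a2 : ∑ i, ‖V⁻¹ k' i‖ ≤ ∑ k, ∑ i, ‖V⁻¹ k i‖ :=
      Finset.single_le_sum (f := fun k => ∑ i, ‖V⁻¹ k i‖) (fun _ _ => Finset.sum_nonneg fun _ _ => norm_nonneg _) (Finset.mem_univ k')
    linarith
  · exact h2 i

lemma rad_succ (K j : ℕ) : (p:ℝ)^(-((K+j:ℕ):ℤ)) = (p:ℝ)^(-(j:ℤ)) * (p:ℝ)^(-(K:ℤ)) := by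
  have h0 : (p:ℝ) ≠ 0 := by exact_mod_cast (Fact.out : p.Prime).ne_zero
  rw [← zpow_add₀ h0]
  congr 1
  push_cast; ring

lemma core (d m : ℕ) : ∃ CV : ℝ, 1 ≤ CV ∧ ∀ (q : ℕ → (Fin d → ℚ_[p]) → ℚ_[p])
    (G : (Fin d → ℚ_[p]) → ℚ_[p]) (al M : ℝ) (K : ℕ), 0 ≤ M → 0 ≤ al →
    (∀ k (c : ℚ_[p]) h, q k (c • h) = c^k * q k h) →
    (∀ h, ‖h‖ ≤ (p:ℝ)^(-(K:ℤ)) → HasSum (fun k => q k h) (G h)) →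
    (∀ k h, m < k → ‖h‖ ≤ (p:ℝ)^(-(K:ℤ)) → ‖q k h‖ ≤ al) →
    (∃ k ≤ m, ∃ h, ‖h‖ ≤ (p:ℝ)^(-(K:ℤ)) ∧ CV * al < ‖q k h‖) →
    (∀ h, ‖h‖ ≤ (p:ℝ)^(-((K+1:ℕ):ℤ)) → ‖G h‖ ≤ M) →
    ∀ k h, ‖h‖ ≤ (p:ℝ)^(-(K:ℤ)) → ‖q k h‖ ≤ CV * M := by
  obtain ⟨C, hC1, hC⟩ := vander p m
  refine ⟨C, hC1, ?_⟩
  intro q G al M K hM0 hal hom hsum hbd hbig hM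
  have h1 : ∀ k ≤ m, ∀ h, ‖h‖ ≤ (p:ℝ)^(-(K:ℤ)) → ‖q k h‖ ≤ C * max M al := by
    intro k hk h hh
    refine hC (fun k => q k h) _ (le_max_of_le_left hM0) ?_ k hk
    intro i
    have hlam : ‖(p:ℚ_[p]) * i‖ ≤ (p:ℝ)⁻¹ := by
      rw [norm_mul, Padic.norm_p]
      have := Padic.norm_int_le_one (p := p) (i:ℤ)
      rw [Int.cast_natCast] at this
      have h0 : (0:ℝ) < p := by exact_mod_cast (Fact.out : p.Prime).pos
      exact mul_le_of_le_one_right (by positivity) this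
    have hlam1 : ‖(p:ℚ_[p]) * i‖ ≤ 1 := hlam.trans (inv_le_one_of_one_le₀ (by exact_mod_cast (Fact.out : p.Prime).one_le))
    have hh1 : ‖((p:ℚ_[p]) * i) • h‖ ≤ (p:ℝ)^(-((K+1:ℕ):ℤ)) := by
      rw [norm_smul, rad_succ]
      have h2 : ((p:ℝ)^(-((1:ℕ):ℤ))) = (p:ℝ)⁻¹ := by simp
      rw [h2]
      gcongr
    have hh2 : ‖((p:ℚ_[p]) * i) • h‖ ≤ (p:ℝ)^(-(K:ℤ)) := by
      rw [norm_smul]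
      exact (mul_le_of_le_one_left (norm_nonneg _) hlam1).trans hh
    have hs := hsum _ hh2
    have hs2 := (hasSum_nat_add_iff' (m+1)).mpr hs
    have ht : ‖G (((p:ℚ_[p]) * i) • h) - ∑ k ∈ Finset.range (m+1), q k (((p:ℚ_[p]) * i) • h)‖ ≤ al :=
      hasSum_norm_le p _ _ hs2 al hal fun k => hbd _ _ (by omega) hh2
    have e : ∑ k ∈ Finset.range (m+1), ((p:ℚ_[p]) * i)^k * q k h
        = G (((p:ℚ_[p]) * i) • h) - (G (((p:ℚ_[p]) * i) • h) - ∑ k ∈ Finset.range (m+1), q k (((p:ℚ_[p]) * i) • h)) := by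
      rw [sub_sub_cancel]
      exact Finset.sum_congr rfl fun k _ => (hom k _ _).symm
    rw [e]
    refine (nsub_le_max p _ _).trans ?_
    exact max_le_max (hM _ hh1) ht
  have h2 : al < M := by
    obtain ⟨k, hk, h, hh, hlt⟩ := hbig
    have h3 := lt_of_lt_of_le hlt (h1 k hk h hh)
    have h4 : al < max M al := lt_of_mul_lt_mul_left h3 (by linarith)
    simpa using h4
  intro k h hh
  by_cases hk : k ≤ m
  · have := h1 k hk h hh
    rwa [max_eq_left h2.le] at this
  · have := hbd k h (by omega) hh
    nlinarith

lemma exists_rad_lt (r : ℝ) (hr : 0 < r) : ∃ k : ℕ, (p:ℝ)^(-(k:ℤ)) < r := by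
  have hp : (1:ℝ) < p := by exact_mod_cast (Fact.out : p.Prime).one_lt
  obtain ⟨k, hk⟩ := exists_pow_lt_of_lt_one hr (inv_lt_one_of_one_lt₀ hp)
  refine ⟨k, ?_⟩
  rwa [zpow_neg, zpow_natCast, ← inv_pow]

lemma sigma_part {b : ℕ → Type} (g : (Σ k, b k) → ℝ≥0) (hg : Summable g) (k : ℕ) :
    Summable (fun s => g ⟨k, s⟩) ∧ ∑' s, g ⟨k, s⟩ ≤ ∑' x, g x := by
  have hi : Function.Injective (Sigma.mk k : b k → Σ k, b k) := sigma_mk_injective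
  refine ⟨(NNReal.summable_sigma.1 hg).1 k, ?_⟩
  exact NNReal.tsum_comp_le_tsum_of_inj hg hi

lemma series {d N : ℕ} (f : (Fin d → ℚ_[p]) → (Fin N → ℚ_[p])) (x₀ : Fin d → ℚ_[p])
    (hf : AnalyticAt ℚ_[p] f x₀) :
    ∃ (Q : (Fin d → ℚ_[p]) → ℕ → (Fin d → ℚ_[p]) → (Fin N → ℚ_[p])) (k0 : ℕ) (A : ℝ), 0 ≤ A ∧
      (∀ y k (c : ℚ_[p]) h, Q y k (c • h) = c^k • Q y k h) ∧
      (∀ y h, ‖y‖ ≤ (p:ℝ)^(-(k0:ℤ)) → ‖h‖ ≤ (p:ℝ)^(-(k0:ℤ)) → HasSum (fun k => Q y k h) (f (x₀ + y + h))) ∧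
      (∀ y k h, ‖y‖ ≤ (p:ℝ)^(-(k0:ℤ)) → ‖Q y k h‖ ≤ A * ((p:ℝ)^k0 * ‖h‖)^k) ∧
      (∀ k h, ContinuousAt (fun y => Q y k h) 0) := by
  obtain ⟨P, r, hP⟩ := hf
  obtain ⟨r1, hr1, hr1r⟩ := ENNReal.lt_iff_exists_nnreal_btwn.mp hP.r_pos
  have hr1' : (0:ℝ) < r1 := by exact_mod_cast hr1
  obtain ⟨k0, hk0⟩ := exists_rad_lt p ((r1:ℝ)/2) (by positivity)
  have hp0 : (0:ℝ) < p := by exact_mod_cast (Fact.out : p.Prime).pos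
  let ρ : ℝ≥0 := ⟨(p:ℝ)^(-(k0:ℤ)), (rad_pos p k0).le⟩
  have hρρ : ((ρ:ℝ≥0∞) + ρ) < r := by
    refine lt_of_le_of_lt ?_ hr1r
    rw [← ENNReal.coe_add, ENNReal.coe_le_coe, ← NNReal.coe_le_coe]
    push_cast
    change (p:ℝ)^(-(k0:ℤ)) + (p:ℝ)^(-(k0:ℤ)) ≤ _
    linarith
  have hρP : ((ρ:ℝ≥0∞) + ρ) < P.radius := hρρ.trans_le hP.r_le
  have hsm := P.changeOriginSeries_summable_aux₁ hρP
  set A : ℝ≥0 := ∑' s : Σ k l : ℕ, { s : Finset (Fin (k + l)) // s.card = l },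
    ‖P (s.1 + s.2.1)‖₊ * ρ ^ s.2.1 * ρ ^ s.1 with hA
  have hbd : ∀ y : Fin d → ℚ_[p], ‖y‖ ≤ (p:ℝ)^(-(k0:ℤ)) → ∀ k, ‖P.changeOrigin y k‖₊ * ρ^k ≤ A := by
    intro y hy k
    have hy' : ‖y‖₊ ≤ ρ := hy
    have hyP : (‖y‖₊ : ℝ≥0∞) < P.radius := by
      refine lt_of_le_of_lt ?_ hρP
      exact (ENNReal.coe_le_coe.mpr hy').trans le_self_add
    obtain ⟨hsk, hsk2⟩ := sigma_part _ hsm k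
    simp only at hsk hsk2
    have h1 := P.nnnorm_changeOrigin_le k hyP
    calc ‖P.changeOrigin y k‖₊ * ρ^k ≤ (∑' s : Σ l : ℕ, { s : Finset (Fin (k + l)) // s.card = l }, ‖P (k + s.1)‖₊ * ‖y‖₊ ^ s.1) * ρ^k := by gcongr
      _ = ∑' s : Σ l : ℕ, { s : Finset (Fin (k + l)) // s.card = l }, ‖P (k + s.1)‖₊ * ‖y‖₊ ^ s.1 * ρ^k := by
        rw [NNReal.tsum_mul_right]
      _ ≤ ∑' s : Σ l : ℕ, { s : Finset (Fin (k + l)) // s.card = l }, ‖P (k + s.1)‖₊ * ρ ^ s.1 * ρ^k := by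
        refine Summable.tsum_le_tsum (fun s => by gcongr) ?_ hsk
        exact NNReal.summable_of_le (fun s => by gcongr) hsk
      _ ≤ A := by
        exact hsk2
  refine ⟨fun y k h => P.changeOrigin y k (fun _ => h), k0, A, A.2, ?_, ?_, ?_, ?_⟩
  · intro y k c h
    have := (P.changeOrigin y k).map_smul_univ (fun _ => c) (fun _ => h)
    simpa using this
  · intro y h hy hh
    have hy' : ‖y‖₊ ≤ ρ := hy
    have hh' : ‖h‖₊ ≤ ρ := hh
    have h1 := hP.changeOrigin (y := y) (by
      refine lt_of_le_of_lt ?_ hρρ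
      exact (ENNReal.coe_le_coe.mpr hy').trans le_self_add)
    refine h1.hasSum ?_
    rw [mem_eball_zero_iff, lt_tsub_iff_right]
    refine lt_of_le_of_lt ?_ hρρ
    exact add_le_add (ENNReal.coe_le_coe.mpr hh') (ENNReal.coe_le_coe.mpr hy')
  · intro y k h hy
    have h1 : ‖P.changeOrigin y k‖ * ((p:ℝ)^(-(k0:ℤ)))^k ≤ A := by exact_mod_cast hbd y hy k
    have h2 := (P.changeOrigin y k).le_opNorm (fun _ => h)
    refine h2.trans ?_
    rw [Finset.prod_const, Finset.card_univ, Fintype.card_fin, mul_pow, ← mul_assoc]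
    gcongr
    rw [zpow_neg, zpow_natCast, inv_pow, ← div_eq_mul_inv, div_le_iff₀ (by positivity)] at h1
    exact h1
  · intro k h
    have hpos : 0 < P.radius := lt_of_lt_of_le hP.r_pos hP.r_le
    have h1 := (P.analyticAt_changeOrigin hpos k).continuousAt
    have h2 : Continuous (fun T : ContinuousMultilinearMap ℚ_[p] (fun _ : Fin k => (Fin d → ℚ_[p])) (Fin N → ℚ_[p]) => T (fun _ => h)) :=
      continuous_eval_const (fun _ => h)
    exact h2.continuousAt.comp h1

lemma dot_norm_le {N : ℕ} (a v : Fin N → ℚ_[p]) : ‖a ⬝ᵥ v‖ ≤ ‖a‖ * ‖v‖ := by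
  refine IsUltrametricDist.norm_sum_le_of_forall_le_of_nonneg (by positivity) fun i _ => ?_
  rw [norm_mul]
  gcongr
  · exact norm_le_pi_norm a i
  · exact norm_le_pi_norm v i

lemma dot_hasSum {N : ℕ} (a : Fin N → ℚ_[p]) (u : ℕ → Fin N → ℚ_[p]) (s : Fin N → ℚ_[p])
    (h : HasSum u s) : HasSum (fun k => a ⬝ᵥ u k) (a ⬝ᵥ s) := by
  rw [Pi.hasSum] at h
  exact hasSum_sum fun i _ => (h i).mul_left (a i)

lemma nondeg {N : ℕ} {ι : Type} (e : ι → Fin N → ℚ_[p]) :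
    ∃ (κ : Type) (_ : Fintype κ) (idx : κ → ι) (c : ℝ), 0 < c ∧ ∀ a : Fin N → ℚ_[p],
      ∃ a' : Fin N → ℚ_[p], (∀ i, a' ⬝ᵥ e i = a ⬝ᵥ e i) ∧ c * ‖a'‖ ≤ ‖fun j => a' ⬝ᵥ e (idx j)‖ := by
  classical
  obtain ⟨κ, idx, hinj, hspan, hli⟩ := exists_linearIndependent' ℚ_[p] e
  have hfin : Finite κ := hli.finite
  have : Fintype κ := Fintype.ofFinite κ
  let B := Module.Basis.span hli
  have hB : ∀ j, ((B j : Submodule.span ℚ_[p] (Set.range (e ∘ idx))) : Fin N → ℚ_[p]) = e (idx j) := by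
    intro j
    exact congrArg Subtype.val (Module.Basis.span_apply hli j)
  have hex : ∀ j, ∃ g : (Fin N → ℚ_[p]) →ₗ[ℚ_[p]] ℚ_[p], g ∘ₗ (Submodule.span ℚ_[p] (Set.range (e ∘ idx))).subtype = B.coord j :=
    fun j => LinearMap.exists_extend _
  choose g hg using hex
  let L : κ → Fin N → ℚ_[p] := fun j l => g j (Pi.single l 1)
  have hL : ∀ j v, g j v = L j ⬝ᵥ v := by
    intro j v
    conv_lhs => rw [← Finset.univ_sum_single v]
    rw [map_sum]
    refine Finset.sum_congr rfl fun l _ => ?_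
    have : (Pi.single l (v l) : Fin N → ℚ_[p]) = v l • Pi.single l 1 := by
      rw [← Pi.single_smul, smul_eq_mul, mul_one]
    rw [this, map_smul, smul_eq_mul, mul_comm]
  let Lam : ℝ := 1 + ∑ j, ‖L j‖
  have hLam : 0 < Lam := by
    have : 0 ≤ ∑ j, ‖L j‖ := Finset.sum_nonneg fun _ _ => norm_nonneg _
    positivity
  refine ⟨κ, this, idx, Lam⁻¹, by positivity, fun a => ?_⟩
  let a' : Fin N → ℚ_[p] := ∑ j, (a ⬝ᵥ e (idx j)) • L j
  have h1 : ∀ v ∈ Submodule.span ℚ_[p] (Set.range (e ∘ idx)), a' ⬝ᵥ v = a ⬝ᵥ v := by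
    intro v hv
    have h2 := B.sum_repr ⟨v, hv⟩
    have h3 : v = ∑ j, (L j ⬝ᵥ v) • e (idx j) := by
      have := congrArg (Submodule.subtype _) h2
      rw [map_sum] at this
      conv_lhs => rw [show v = Submodule.subtype _ (⟨v, hv⟩ : Submodule.span ℚ_[p] (Set.range (e ∘ idx))) from rfl, ← this]
      refine Finset.sum_congr rfl fun j _ => ?_
      rw [map_smul]
      have h4 := LinearMap.congr_fun (hg j) ⟨v, hv⟩
      rw [LinearMap.comp_apply, hL] at h4
      have h5 : B.coord j ⟨v, hv⟩ = B.repr ⟨v, hv⟩ j := rfl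
      rw [← h5, ← h4]
      exact congrArg ((L j ⬝ᵥ v) • ·) (hB j)
    conv_rhs => rw [h3]
    simp only [a']
    rw [sum_dotProduct, dotProduct_sum]
    refine Finset.sum_congr rfl fun j _ => ?_
    rw [smul_dotProduct, dotProduct_smul, smul_eq_mul, smul_eq_mul, mul_comm]
  have h6 : ∀ i, a' ⬝ᵥ e i = a ⬝ᵥ e i := by
    intro i
    apply h1
    rw [hspan]
    exact Submodule.subset_span ⟨i, rfl⟩
  refine ⟨a', h6, ?_⟩
  rw [inv_mul_le_iff₀ hLam]
  have h7 : (fun j => a' ⬝ᵥ e (idx j)) = fun j => a ⬝ᵥ e (idx j) := funext fun j => h6 _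
  rw [h7]
  refine (norm_sum_le _ _).trans ?_
  calc ∑ j, ‖(a ⬝ᵥ e (idx j)) • L j‖ ≤ ∑ j, ‖L j‖ * ‖fun j => a ⬝ᵥ e (idx j)‖ := by
        refine Finset.sum_le_sum fun j _ => ?_
        rw [norm_smul, mul_comm]
        gcongr
        exact norm_le_pi_norm (fun j => a ⬝ᵥ e (idx j)) j
    _ = (∑ j, ‖L j‖) * ‖fun j => a ⬝ᵥ e (idx j)‖ := by rw [Finset.sum_mul]
    _ ≤ _ := by
      gcongr
      simp [Lam]

lemma keyG {d N : ℕ} (f : (Fin d → ℚ_[p]) → (Fin N → ℚ_[p])) (x₀ : Fin d → ℚ_[p])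
    (hf : AnalyticAt ℚ_[p] f x₀) : ∃ (k0 : ℕ) (C : ℝ), 1 ≤ C ∧ ContinuousOn f (cb p x₀ k0) ∧
      ∀ (a : Fin N → ℚ_[p]) (x₁ : Fin d → ℚ_[p]), x₁ ∈ cb p x₀ k0 → ∀ (K : ℕ) (M : ℝ), k0 ≤ K → 0 ≤ M →
      (∀ x ∈ cb p x₁ (K+1), ‖a ⬝ᵥ f x‖ ≤ M) →
      ∀ j, ∀ x ∈ cb p x₁ (K+j), ‖a ⬝ᵥ f x - a ⬝ᵥ f x₁‖ ≤ (p:ℝ)^(-(j:ℤ)) * (C * M) := by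
  obtain ⟨Q, k1, A, hA, hom, hsum, hbd, hcont⟩ := series p f x₀ hf
  obtain ⟨κ, hκ, idx, c, hc, hnd⟩ := nondeg p (fun i : ℕ × {h : Fin d → ℚ_[p] // ‖h‖ ≤ 1} => Q 0 i.1 i.2)
  let m : ℕ := Finset.univ.sup fun j => (idx j).1
  obtain ⟨CV, hCV, hcore⟩ := core p d m
  have hp1 : (1:ℝ) < p := by exact_mod_cast (Fact.out : p.Prime).one_lt
  have hp0 : (0:ℝ) < p := by linarith
  -- continuity
  have hev : ∀ᶠ y in nhds (0 : Fin d → ℚ_[p]), ∀ j, ‖Q y (idx j).1 (idx j).2 - Q 0 (idx j).1 (idx j).2‖ < c / 2 := by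
    rw [Filter.eventually_all]
    intro j
    have := (hcont (idx j).1 (idx j).2)
    have h2 := (Metric.tendsto_nhds.mp this) (c/2) (by positivity)
    simpa only [dist_eq_norm] using h2
  obtain ⟨δ, hδ, hδ2⟩ := Metric.eventually_nhds_iff.mp hev
  obtain ⟨k2, hk2⟩ := exists_rad_lt p δ hδ
  obtain ⟨k3, hk3⟩ := exists_rad_lt p ((c/2) / (CV * A * ((p:ℝ)^k1)^(m+1) + 1)) (by positivity)
  obtain ⟨k4, hk4⟩ : ∃ k4 : ℕ, ContinuousOn f (cb p x₀ k4) := by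
    obtain ⟨r, hr, hr2⟩ := hf.exists_ball_analyticOnNhd
    obtain ⟨k4, hk4⟩ := exists_rad_lt p r hr
    exact ⟨k4, hr2.continuousOn.mono (closedBall_subset_ball hk4)⟩
  have rmono : ∀ {k l : ℕ}, k ≤ l → (p:ℝ)^(-(l:ℤ)) ≤ (p:ℝ)^(-(k:ℤ)) := by
    intro k l h
    have := hp1.le
    gcongr
  let k0 := max (max k1 k4) (max k2 k3)
  have h01 : k1 ≤ k0 := (le_max_left _ _).trans (le_max_left _ _)
  have h04 : k4 ≤ k0 := (le_max_right _ _).trans (le_max_left _ _)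
  have h02 : k2 ≤ k0 := (le_max_left _ _).trans (le_max_right _ _)
  have h03 : k3 ≤ k0 := (le_max_right _ _).trans (le_max_right _ _)
  refine ⟨k0, CV, hCV, hk4.mono (cb_mono p x₀ h04), ?_⟩
  intro a x₁ hx₁ K M hK hM0 hM j x hx
  obtain ⟨a', ha', hca'⟩ := hnd a
  -- same function
  have hsame : ∀ x ∈ cb p x₀ k1, a' ⬝ᵥ f x = a ⬝ᵥ f x := by
    intro x hx
    rw [cb, mem_closedBall, dist_eq_norm] at hx
    have hh1 : ‖x - x₀‖ ≤ 1 := hx.trans (by simpa using rmono (Nat.zero_le k1))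
    have h1 := hsum 0 (x - x₀) (by simpa using (rad_pos p k1).le) hx
    rw [add_zero, add_sub_cancel] at h1
    have h2 := dot_hasSum p a' _ _ h1
    have h3 := dot_hasSum p a _ _ h1
    have h4 : (fun k => a' ⬝ᵥ Q 0 k (x - x₀)) = fun k => a ⬝ᵥ Q 0 k (x - x₀) :=
      funext fun k => ha' (k, ⟨x - x₀, hh1⟩)
    rw [h4] at h2
    exact h2.unique h3
  have hball : ∀ i, ∀ x ∈ cb p x₁ (K + i), x ∈ cb p x₀ k1 := fun i x hx =>
    cb_mono p x₀ h01 (cb_sub p hx₁ (by omega) hx)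
  rw [← hsame x (hball j x hx), ← hsame x₁ (cb_mono p x₀ h01 hx₁)]
  by_cases ha0 : a' = 0
  · rw [ha0]
    have := rad_pos p j
    simp
    positivity
  have han : 0 < ‖a'‖ := norm_pos_iff.mpr ha0
  let y := x₁ - x₀
  have hy : ‖y‖ ≤ (p:ℝ)^(-(k0:ℤ)) := by
    rw [cb, mem_closedBall, dist_eq_norm] at hx₁; exact hx₁
  have hy1 := hy.trans (rmono h01)
  have hxy : x₀ + y = x₁ := add_sub_cancel _ _
  set r := (p:ℝ)^(-(K:ℤ)) with hr
  have hr0 : 0 < r := rad_pos p K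
  have hr1 : r ≤ 1 := by rw [hr]; simpa using rmono (Nat.zero_le K)
  have hrk1 : (p:ℝ)^k1 * r ≤ 1 := by
    have := rmono (h01.trans hK)
    rw [zpow_neg _ (k1:ℤ), zpow_natCast] at this
    calc (p:ℝ)^k1 * r ≤ (p:ℝ)^k1 * ((p:ℝ)^k1)⁻¹ := by gcongr
      _ = 1 := mul_inv_cancel₀ (by positivity)
  have hrsmall : CV * A * ((p:ℝ)^k1)^(m+1) * r < c / 2 := by
    have h1 : r < (c/2) / (CV * A * ((p:ℝ)^k1)^(m+1) + 1) := lt_of_le_of_lt (rmono (h03.trans hK)) hk3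
    rw [lt_div_iff₀ (by positivity)] at h1
    nlinarith
  -- big coefficient
  obtain ⟨i, hi⟩ : ∃ i, c * ‖a'‖ ≤ ‖a' ⬝ᵥ Q 0 (idx i).1 (idx i).2‖ := by
    by_contra hcon
    push Not at hcon
    have : ‖fun j => a' ⬝ᵥ Q 0 (idx j).1 (idx j).2‖ < c * ‖a'‖ := by
      rw [pi_norm_lt_iff (by positivity)]
      exact hcon
    exact absurd hca' (not_le.mpr this)
  have hi2 : c / 2 * ‖a'‖ ≤ ‖a' ⬝ᵥ Q y (idx i).1 (idx i).2‖ := by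
    have h1 : ‖Q y (idx i).1 (idx i).2 - Q 0 (idx i).1 (idx i).2‖ < c / 2 := by
      refine hδ2 ?_ i
      rw [dist_zero_right]
      exact lt_of_le_of_lt (hy.trans (rmono h02)) hk2
    have h2 : a' ⬝ᵥ Q 0 (idx i).1 (idx i).2 = a' ⬝ᵥ Q y (idx i).1 (idx i).2 - a' ⬝ᵥ (Q y (idx i).1 (idx i).2 - Q 0 (idx i).1 (idx i).2) := by
      rw [dotProduct_sub]; ring
    have h3 := norm_sub_le (a' ⬝ᵥ Q y (idx i).1 (idx i).2) (a' ⬝ᵥ (Q y (idx i).1 (idx i).2 - Q 0 (idx i).1 (idx i).2))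
    rw [← h2] at h3
    have h4 := dot_norm_le p a' (Q y (idx i).1 (idx i).2 - Q 0 (idx i).1 (idx i).2)
    nlinarith
  have him : (idx i).1 ≤ m := Finset.le_sup (f := fun j => (idx j).1) (Finset.mem_univ i)
  have homq : ∀ k (c : ℚ_[p]) h, a' ⬝ᵥ Q y k (c • h) = c^k * (a' ⬝ᵥ Q y k h) := by
    intro k c h
    rw [hom, dotProduct_smul, smul_eq_mul]
  have hsumq : ∀ h, ‖h‖ ≤ (p:ℝ)^(-(K:ℤ)) → HasSum (fun k => a' ⬝ᵥ Q y k h) (a' ⬝ᵥ f (x₁ + h)) := by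
    intro h hh
    apply dot_hasSum
    rw [← hxy]
    exact hsum y h hy1 (hh.trans (rmono (h01.trans hK)))
  have hq := hcore (fun k h => a' ⬝ᵥ Q y k h) (fun h => a' ⬝ᵥ f (x₁ + h))
    (A * ‖a'‖ * ((p:ℝ)^k1 * r)^(m+1)) M K hM0 (by positivity) homq hsumq
    (by
      intro k h hk hh
      refine (dot_norm_le p _ _).trans ?_
      have h1 := hbd y k h hy1
      have h2 : ((p:ℝ)^k1 * ‖h‖)^k ≤ ((p:ℝ)^k1 * r)^(m+1) := by
        calc ((p:ℝ)^k1 * ‖h‖)^k ≤ ((p:ℝ)^k1 * r)^k := by gcongr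
          _ ≤ _ := pow_le_pow_of_le_one (by positivity) hrk1 (by omega)
      calc ‖a'‖ * ‖Q y k h‖ ≤ ‖a'‖ * (A * ((p:ℝ)^k1 * r)^(m+1)) := by
            gcongr
            exact h1.trans (by gcongr)
        _ = _ := by ring)
    (by
      refine ⟨(idx i).1, him, (p:ℚ_[p])^K • ((idx i).2 : Fin d → ℚ_[p]), ?_, ?_⟩
      · rw [norm_smul, norm_pow, Padic.norm_p, inv_pow, zpow_neg, zpow_natCast]
        exact mul_le_of_le_one_right (by positivity) (idx i).2.2
      · rw [homq, norm_mul, norm_pow, norm_pow, Padic.norm_p, inv_pow]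
        have e1 : ((p:ℝ)^K)⁻¹ = r := by rw [hr, zpow_neg, zpow_natCast]
        rw [e1]
        have h1 : r^m ≤ r^(idx i).1 := pow_le_pow_of_le_one hr0.le hr1 him
        calc CV * (A * ‖a'‖ * ((p:ℝ)^k1 * r)^(m+1))
            = (CV * A * ((p:ℝ)^k1)^(m+1) * r) * (r^m * ‖a'‖) := by rw [mul_pow]; ring
          _ < (c / 2) * (r^m * ‖a'‖) := by gcongr
          _ = r^m * (c / 2 * ‖a'‖) := by ring
          _ ≤ _ := by gcongr)
    (by
      intro h hh
      have hmem : x₁ + h ∈ cb p x₁ (K+1) := by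
        rw [cb, mem_closedBall, dist_eq_norm, add_sub_cancel_left]; exact hh
      rw [hsame _ (hball 1 _ hmem)]
      exact hM _ hmem)
  -- conclude
  rw [cb, mem_closedBall, dist_eq_norm] at hx
  set h := x - x₁ with hh
  have hxh : x = x₁ + h := by rw [hh]; abel
  have hpj : (p:ℚ_[p])^j ≠ 0 := pow_ne_zero _ (by exact_mod_cast (Fact.out : p.Prime).ne_zero)
  let h' : Fin d → ℚ_[p] := ((p:ℚ_[p])^j)⁻¹ • h
  have hh' : h = (p:ℚ_[p])^j • h' := by rw [smul_smul, mul_inv_cancel₀ hpj, one_smul]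
  have hnp : ‖(p:ℚ_[p])^j‖ = (p:ℝ)^(-(j:ℤ)) := by
    rw [norm_pow, Padic.norm_p, inv_pow, zpow_neg, zpow_natCast]
  have hh'n : ‖h'‖ ≤ (p:ℝ)^(-(K:ℤ)) := by
    rw [rad_succ, ← hnp, hh', norm_smul] at hx
    exact le_of_mul_le_mul_left hx (by rw [hnp]; exact rad_pos p j)
  have hhK : ‖h‖ ≤ (p:ℝ)^(-(K:ℤ)) := hx.trans (rmono (by omega))
  have hs := hsumq h hhK
  have hs0 := hsumq 0 (by rw [norm_zero]; exact (rad_pos p K).le)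
  have e0 : a' ⬝ᵥ f x₁ = a' ⬝ᵥ Q y 0 h := by
    rw [add_zero] at hs0
    have e2 : ∀ k, a' ⬝ᵥ Q y k 0 = 0^k * (a' ⬝ᵥ Q y k h) := by
      intro k; rw [← homq, zero_smul]
    have h5 := hasSum_single (f := fun k => a' ⬝ᵥ Q y k 0) 0 (by
      intro k hk; simp only [e2, zero_pow hk, zero_mul])
    have h6 := hs0.unique h5
    rw [h6, e2]; simp
  have hs2 := (hasSum_nat_add_iff' 1).mpr hs
  rw [Finset.sum_range_one, ← e0, ← hxh] at hs2
  refine hasSum_norm_le p _ _ hs2 _ (by have := rad_pos p j; positivity) fun k => ?_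
  rw [hh', homq, norm_mul, norm_pow, hnp]
  have h8 := hq (k+1) h' hh'n
  have h9 : ((p:ℝ)^(-(j:ℤ)))^(k+1) ≤ (p:ℝ)^(-(j:ℤ)) := by
    apply pow_le_of_le_one (rad_pos p j).le _ (by omega)
    simpa using rmono (Nat.zero_le j)
  have := rad_pos p j
  gcongr

lemma goodTop {d N : ℕ} (f : (Fin d → ℚ_[p]) → (Fin N → ℚ_[p])) (x₀ : Fin d → ℚ_[p])
    (hf : AnalyticAt ℚ_[p] f x₀) : ∃ (k0 : ℕ), ContinuousOn f (cb p x₀ k0) ∧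
      ∃ (θ : ℝ) (J : ℕ), 0 < θ ∧ θ < 1 ∧
      ∀ (a : Fin N → ℚ_[p]) (x₁ : Fin d → ℚ_[p]), x₁ ∈ cb p x₀ k0 → ∀ K : ℕ, k0 ≤ K → ∀ z ∈ cb p x₁ K,
      (∃ w ∈ cb p x₁ (K + J), θ * ‖a ⬝ᵥ f z‖ ≤ ‖a ⬝ᵥ f w‖) ∧
      (∃ y ∈ cb p x₁ K, ∀ w ∈ cb p y (K + J), ‖a ⬝ᵥ f z‖ ≤ ‖a ⬝ᵥ f w‖) := by
  obtain ⟨k0, C, hC, hcont, hkey⟩ := keyG p f x₀ hf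
  have hp1 : (1:ℝ) < p := by exact_mod_cast (Fact.out : p.Prime).one_lt
  obtain ⟨J, hJ⟩ := exists_rad_lt p C⁻¹ (by positivity)
  have hCJ : 1 ≤ C^J := one_le_pow₀ hC
  have hmax : ∀ (a : Fin N → ℚ_[p]) (x₁ : Fin d → ℚ_[p]), x₁ ∈ cb p x₀ k0 → ∀ K : ℕ, k0 ≤ K →
      ∃ w ∈ cb p x₁ K, ∀ x ∈ cb p x₁ K, ‖a ⬝ᵥ f x‖ ≤ ‖a ⬝ᵥ f w‖ := by
    intro a x₁ hx₁ K hK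
    have hc : ContinuousOn (fun x => ‖a ⬝ᵥ f x‖) (cb p x₁ K) := by
      have h1 : ContinuousOn f (cb p x₁ K) := hcont.mono (cb_sub p hx₁ hK)
      have h2 : Continuous (fun v : Fin N → ℚ_[p] => ‖a ⬝ᵥ v‖) := by
        unfold dotProduct; fun_prop
      exact h2.comp_continuousOn h1
    exact (isCompact_closedBall x₁ _).exists_isMaxOn ⟨x₁, mem_cb_self p x₁ K⟩ hc
  have hdoub : ∀ (a : Fin N → ℚ_[p]) (x₁ : Fin d → ℚ_[p]), x₁ ∈ cb p x₀ k0 → ∀ K : ℕ, k0 ≤ K → ∀ z ∈ cb p x₁ K,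
      ∃ w ∈ cb p x₁ (K + 1), ‖a ⬝ᵥ f z‖ ≤ C * ‖a ⬝ᵥ f w‖ := by
    intro a x₁ hx₁ K hK z hz
    obtain ⟨w, hw, hw2⟩ := hmax a x₁ hx₁ (K+1) (by omega)
    refine ⟨w, hw, ?_⟩
    have h1 := hkey a x₁ hx₁ K _ hK (norm_nonneg _) hw2 0 z hz
    have h2 := hw2 x₁ (mem_cb_self p _ _)
    have h3 := IsUltrametricDist.norm_add_le_max (a ⬝ᵥ f z - a ⬝ᵥ f x₁) (a ⬝ᵥ f x₁)
    rw [sub_add_cancel] at h3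
    refine h3.trans (max_le (by simpa using h1) ?_)
    nlinarith [norm_nonneg (a ⬝ᵥ f w)]
  have hiter : ∀ (J : ℕ) (a : Fin N → ℚ_[p]) (x₁ : Fin d → ℚ_[p]), x₁ ∈ cb p x₀ k0 → ∀ K : ℕ, k0 ≤ K → ∀ z ∈ cb p x₁ K,
      ∃ w ∈ cb p x₁ (K + J), ‖a ⬝ᵥ f z‖ ≤ C^J * ‖a ⬝ᵥ f w‖ := by
    intro J a x₁ hx₁ K hK z hz
    induction J with
    | zero => exact ⟨z, hz, by simp⟩
    | succ J ih =>
      obtain ⟨w, hw, hw2⟩ := ih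
      obtain ⟨w', hw', hw2'⟩ := hdoub a x₁ hx₁ (K+J) (by omega) w hw
      refine ⟨w', hw', hw2.trans ?_⟩
      calc C^J * ‖a ⬝ᵥ f w‖ ≤ C^J * (C * ‖a ⬝ᵥ f w'‖) := by gcongr
        _ = _ := by ring
  refine ⟨k0, hcont, (C^J + 1)⁻¹, J, by positivity, inv_lt_one_of_one_lt₀ (by linarith), ?_⟩
  intro a x₁ hx₁ K hK z hz
  constructor
  · obtain ⟨w, hw, hw2⟩ := hiter J a x₁ hx₁ K hK z hz
    refine ⟨w, hw, ?_⟩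
    rw [inv_mul_le_iff₀ (by positivity)]
    nlinarith [norm_nonneg (a ⬝ᵥ f w)]
  · obtain ⟨y, hy, hy2⟩ := hmax a x₁ hx₁ K hK
    refine ⟨y, hy, fun w hw => (hy2 z hz).trans ?_⟩
    have hy0 : y ∈ cb p x₀ k0 := cb_sub p hx₁ hK hy
    have h1 := hkey a y hy0 K _ hK (norm_nonneg (a ⬝ᵥ f y)) (fun x hx => hy2 x (cb_sub p hy (by omega) hx)) J w hw
    rcases eq_or_lt_of_le (norm_nonneg (a ⬝ᵥ f y)) with h0 | h0
    · rw [← h0]; exact norm_nonneg _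
    have h2 : ‖a ⬝ᵥ f w - a ⬝ᵥ f y‖ < ‖a ⬝ᵥ f y‖ := by
      refine lt_of_le_of_lt h1 ?_
      have : (p:ℝ)^(-(J:ℤ)) * C < 1 := by
        rw [lt_inv_comm₀ (rad_pos p J) (by positivity)] at hJ
        rw [← lt_inv_mul_iff₀ (rad_pos p J), mul_one]; exact hJ
      nlinarith
    have h3 := nsub_le_max p (a ⬝ᵥ f w) (a ⬝ᵥ f w - a ⬝ᵥ f y)
    rw [sub_sub_cancel] at h3
    rcases le_max_iff.mp h3 with h4 | h4
    · exact h4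
    · linarith

lemma cb_pow {d : ℕ} (μ : Measure (Fin d → ℚ_[p])) (D : ℕ)
    (hD : ∀ x k, μ (cb p x k) ≤ D * μ (cb p x (k+1))) (x : Fin d → ℚ_[p]) (k J : ℕ) :
    μ (cb p x k) ≤ (D:ℝ≥0∞)^J * μ (cb p x (k+J)) := by
  induction J with
  | zero => simp
  | succ J ih =>
    refine ih.trans ?_
    calc (D:ℝ≥0∞)^J * μ (cb p x (k+J)) ≤ (D:ℝ≥0∞)^J * (D * μ (cb p x (k+J+1))) := by gcongr; exact hD _ _
      _ = _ := by rw [pow_succ, mul_assoc]; rfl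

lemma goodIter {d : ℕ} (μ : Measure (Fin d → ℚ_[p])) [μ.IsAddHaarMeasure] (D : ℕ) (hD1 : 1 ≤ D)
    (hD : ∀ x k, μ (cb p x k) ≤ D * μ (cb p x (k+1))) (g : (Fin d → ℚ_[p]) → ℝ)
    (x₀ : Fin d → ℚ_[p]) (k0 J : ℕ) (θ : ℝ) (hθ : 0 < θ)
    (h : ∀ x₁ ∈ cb p x₀ k0, ∀ K : ℕ, k0 ≤ K → ∀ z ∈ cb p x₁ K,
      (∃ w ∈ cb p x₁ (K + J), θ * g z ≤ g w) ∧ (∃ y ∈ cb p x₁ K, ∀ w ∈ cb p y (K + J), g z ≤ g w))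
    (hg0 : ∀ x, 0 ≤ g x) (hθ1 : θ < 1)
    (i : ℕ) : ∀ x₁ ∈ cb p x₀ k0, ∀ K : ℕ, k0 ≤ K → ∀ z ∈ cb p x₁ K,
      μ {x ∈ cb p x₁ K | g x < θ^i * g z} ≤ (1 - ((D:ℝ≥0∞)^J)⁻¹)^i * μ (cb p x₁ K) := by
  induction i with
  | zero =>
    intro x₁ _ K _ z _
    rw [pow_zero (1 - ((D:ℝ≥0∞)^J)⁻¹), one_mul]
    exact measure_mono fun x hx => hx.1
  | succ i ih =>
    intro x₁ hx₁ K hK z hz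
    obtain ⟨y, hy, hy2⟩ := (h x₁ hx₁ K hK z hz).2
    set Z := {x ∈ cb p x₁ K | g x < θ^(i+1) * g z} with hZ
    set O := cb p x₁ K \ cb p y (K+J) with hO
    have hZG : ∀ x ∈ Z, x ∉ cb p y (K+J) := by
      intro x hx hxy
      have h1 := hy2 x hxy
      have h2 := hx.2
      have h3 : θ^(i+1) ≤ 1 := pow_le_one₀ hθ.le hθ1.le
      nlinarith [hg0 z]
    have h1 : μ Z ≤ (1 - ((D:ℝ≥0∞)^J)⁻¹)^i * μ O := by
      apply vit p
      intro w hw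
      refine ⟨K+J, ?_, ?_⟩
      · intro u hu
        refine ⟨cb_sub p hw.1 (by omega) hu, fun huy => ?_⟩
        apply hZG w hw
        rw [← cb_eq p huy, cb_eq p hu]
        exact mem_cb_self p _ _
      · have hw0 : w ∈ cb p x₀ k0 := cb_sub p hx₁ hK hw.1
        obtain ⟨z', hz', hz2⟩ := (h w hw0 K hK z (by rw [cb_eq p hw.1]; exact hz)).1
        refine le_trans (measure_mono ?_) (ih w hw0 (K+J) (by omega) z' hz')
        rintro u ⟨hu1, hu2⟩
        refine ⟨hu2, hu1.2.trans_le ?_⟩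
        calc θ^(i+1) * g z = θ^i * (θ * g z) := by ring
          _ ≤ θ^i * g z' := by gcongr
    have hD0 : (D:ℝ≥0∞)^J ≠ 0 := pow_ne_zero _ (by exact_mod_cast (by omega : D ≠ 0))
    have hDt : (D:ℝ≥0∞)^J ≠ ⊤ := ENNReal.pow_ne_top (ENNReal.natCast_ne_top D)
    have hfin : μ (cb p x₁ K) ≠ ⊤ := (isCompact_closedBall x₁ _).measure_lt_top.ne
    have hsub : cb p y (K+J) ⊆ cb p x₁ K := cb_sub p hy (by omega)
    have h2 : μ O ≤ (1 - ((D:ℝ≥0∞)^J)⁻¹) * μ (cb p x₁ K) := by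
      rw [hO, measure_sdiff hsub (cb_open p _ _).measurableSet.nullMeasurableSet
        (ne_top_of_le_ne_top hfin (measure_mono hsub)), ENNReal.sub_mul (fun _ _ => hfin), one_mul]
      gcongr
      have h3 := cb_pow p μ D hD y K J
      rw [cb_eq p hy] at h3
      rwa [ENNReal.inv_mul_le_iff hD0 hDt]
    calc μ Z ≤ (1 - ((D:ℝ≥0∞)^J)⁻¹)^i * μ O := h1
      _ ≤ (1 - ((D:ℝ≥0∞)^J)⁻¹)^i * ((1 - ((D:ℝ≥0∞)^J)⁻¹) * μ (cb p x₁ K)) := by gcongr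
      _ = _ := by rw [pow_succ, mul_assoc]

lemma good {d N : ℕ} (f : (Fin d → ℚ_[p]) → (Fin N → ℚ_[p])) (x₀ : Fin d → ℚ_[p])
    (hf : AnalyticAt ℚ_[p] f x₀) : ∃ (k0 : ℕ), ContinuousOn f (cb p x₀ k0) ∧
      ∀ (μ : Measure (Fin d → ℚ_[p])), μ.IsAddHaarMeasure → ∃ C al : ℝ, 0 < C ∧ 0 < al ∧
      ∀ (a : Fin N → ℚ_[p]) (x₁ : Fin d → ℚ_[p]), x₁ ∈ cb p x₀ k0 → ∀ K : ℕ, k0 ≤ K → ∀ z ∈ cb p x₁ K,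
      ∀ ε : ℝ, 0 < ε → ε ≤ 1 →
      μ {x ∈ cb p x₁ K | ‖a ⬝ᵥ f x‖ < ε * ‖a ⬝ᵥ f z‖} ≤ ENNReal.ofReal (C * ε^al) * μ (cb p x₁ K) := by
  obtain ⟨k0, hcont, θ, J, hθ, hθ1, hgood⟩ := goodTop p f x₀ hf
  refine ⟨k0, hcont, fun μ hμ => ?_⟩
  obtain ⟨D', hD1', hD'⟩ := haar_doubling p μ
  -- enlarge
  let D := D' + 1
  have hD : ∀ x k, μ (cb p x k) ≤ D * μ (cb p x (k+1)) := by
    intro x k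
    refine (hD' x k).trans ?_
    gcongr
    simp [D]
  have hgood' : ∀ a, ∀ x₁ ∈ cb p x₀ k0, ∀ K : ℕ, k0 ≤ K → ∀ z ∈ cb p x₁ K,
      (∃ w ∈ cb p x₁ (K + J), θ * ‖a ⬝ᵥ f z‖ ≤ ‖a ⬝ᵥ f w‖) ∧ (∃ y ∈ cb p x₁ K, ∀ w ∈ cb p y (K + J), ‖a ⬝ᵥ f z‖ ≤ ‖a ⬝ᵥ f w‖) := hgood
  let eta : ℝ := max (1/2) (1 - ((D:ℝ)^J)⁻¹)
  have hDpos : (0:ℝ) < (D:ℝ)^J := by simp only [D]; positivity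
  have heta0 : 0 < eta := lt_of_lt_of_le (by norm_num) (le_max_left _ _)
  have heta1 : eta < 1 := by
    refine max_lt (by norm_num) ?_
    have : 0 < ((D:ℝ)^J)⁻¹ := by positivity
    linarith
  let al : ℝ := Real.log eta / Real.log θ
  have hlθ : Real.log θ < 0 := Real.log_neg hθ hθ1
  have hle : Real.log eta < 0 := Real.log_neg heta0 heta1
  have hal : 0 < al := div_pos_of_neg_of_neg hle hlθ
  have hθal : θ ^ al = eta := by
    rw [Real.rpow_def_of_pos hθ, mul_div_cancel₀ _ hlθ.ne, Real.exp_log heta0]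
  refine ⟨eta⁻¹, al, by positivity, hal, ?_⟩
  intro a x₁ hx₁ K hK z hz ε hε hε1
  obtain ⟨i, hi1, hi2⟩ := exists_nat_pow_near_of_lt_one hε hε1 hθ hθ1
  have h1 := goodIter p μ D (by omega) hD (fun x => ‖a ⬝ᵥ f x‖) x₀ k0 J θ hθ (hgood' a) (fun x => norm_nonneg _) hθ1 i x₁ hx₁ K hK z hz
  refine (measure_mono ?_).trans (h1.trans ?_)
  · rintro x ⟨hx, hx2⟩
    exact ⟨hx, hx2.trans_le (by gcongr)⟩
  · gcongr
    have e1 : (1 - ((D:ℝ≥0∞)^J)⁻¹) = ENNReal.ofReal (1 - ((D:ℝ)^J)⁻¹) := by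
      rw [ENNReal.ofReal_sub _ (by positivity), ENNReal.ofReal_one, ENNReal.ofReal_inv_of_pos hDpos,
        ENNReal.ofReal_pow (by positivity), ENNReal.ofReal_natCast]
    have hD1R : (1:ℝ) ≤ (D:ℝ)^J := one_le_pow₀ (by simp [D])
    have hnn : 0 ≤ 1 - ((D:ℝ)^J)⁻¹ := by
      have := inv_le_one_of_one_le₀ hD1R
      linarith
    rw [e1, ← ENNReal.ofReal_pow hnn]
    apply ENNReal.ofReal_le_ofReal
    have h3 : (1 - ((D:ℝ)^J)⁻¹)^i ≤ eta^i := by gcongr; exact le_max_right _ _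
    refine h3.trans ?_
    rw [le_inv_mul_iff₀ heta0, ← pow_succ', ← hθal, ← Real.rpow_natCast, ← Real.rpow_mul hθ.le, mul_comm al,
      Real.rpow_mul hθ.le, Real.rpow_natCast]
    gcongr

/-- Protected points. -/
inductive Prot {P : Type*} [PartialOrder P] (ε : ℝ) (ψ : P → ℝ) : Set P → Prop
  | base (S : Set P) (h : ∀ V ∈ S, 1 ≤ ψ V) : Prot ε ψ S
  | step (S : Set P) (U : P) (hU : U ∈ S) (h1 : ε ≤ ψ U) (h2 : ψ U ≤ 1)
      (h : Prot ε ψ {V ∈ S | V < U ∨ U < V}) : Prot ε ψ S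

/-- The constants in the covering argument. -/
def eK (D : ℕ) : ℕ → ℕ
  | 0 => 0
  | j + 1 => D * (eK D j + 1)

lemma km {d : ℕ} {P : Type*} [PartialOrder P] (r : P → ℕ) (hr : StrictMono r)
    (μ : Measure (Fin d → ℚ_[p])) (D : ℕ)
    (hD : ∀ x k, μ (cb p x k) ≤ D * μ (cb p x (k+1))) (ψ : (Fin d → ℚ_[p]) → P → ℝ)
    (x₀ : Fin d → ℚ_[p]) (k0 : ℕ) (ε : ℝ) (ω : ℝ≥0∞)
    (hc : ∀ V, ∀ x ∈ cb p x₀ k0, ψ x V < 1 → ∃ k, ∀ y ∈ cb p x k, ψ y V < 1)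
    (hg : ∀ V, ∀ x₁ ∈ cb p x₀ k0, ∀ K, k0 ≤ K → ∀ z ∈ cb p x₁ K, 1 ≤ ψ z V →
      μ {x ∈ cb p x₁ K | ψ x V < ε} ≤ ω * μ (cb p x₁ K)) (j : ℕ) :
    ∀ (S : Set P) (T : Finset ℕ), T.card = j → (∀ V ∈ S, r V ∈ T) →
      ∀ x₁ ∈ cb p x₀ k0, ∀ K, k0 ≤ K → (∀ V ∈ S, ∃ z ∈ cb p x₁ K, 1 ≤ ψ z V) →
      μ {x ∈ cb p x₁ K | ¬ Prot ε (ψ x) S} ≤ (eK D j : ℝ≥0∞) * ω * μ (cb p x₁ K) := by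
  classical
  induction j with
  | zero =>
    intro S T hT hS x₁ _ K _ _
    have hT0 := Finset.card_eq_zero.1 hT
    have : {x ∈ cb p x₁ K | ¬ Prot ε (ψ x) S} = ∅ := by
      ext x
      simp only [Set.mem_ofPred_eq, Set.mem_empty_iff_false, iff_false, not_and, not_not]
      intro _
      refine Prot.base _ fun V hV => ?_
      have := hS V hV
      simp [hT0] at this
    rw [this]; simp
  | succ j ih =>
    intro S T hT hS x₁ hx₁ K hK hsup
    apply vit p
    intro x hx
    have hx0 : x ∈ cb p x₀ k0 := cb_sub p hx₁ hK hx.1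
    have hex : ∃ k, ∃ V ∈ S, ∀ y ∈ cb p x k, ψ y V < 1 := by
      by_contra hcon
      apply hx.2
      refine Prot.base _ fun V hV => ?_
      by_contra hlt
      obtain ⟨k, hk⟩ := hc V x hx0 (not_le.1 hlt)
      exact hcon ⟨k, V, hV, hk⟩
    obtain ⟨V, hV, hVk⟩ := Nat.find_spec hex
    have hmin := fun m => @Nat.find_min _ _ hex m
    generalize Nat.find hex = k' at hVk hmin
    have hk' : K < k' := by
      by_contra hle
      push Not at hle
      obtain ⟨z, hz, hz1⟩ := hsup V hV
      have : z ∈ cb p x k' := by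
        rw [← cb_eq p hx.1] at hz
        exact cb_mono p x hle hz
      linarith [hVk z this]
    obtain ⟨k, rfl⟩ : ∃ k, k' = k + 1 := ⟨k' - 1, by omega⟩
    have hKk : K ≤ k := by omega
    have hpar : ∀ V' ∈ S, ∃ z ∈ cb p x k, 1 ≤ ψ z V' := by
      intro V' hV'
      by_contra hcon
      push Not at hcon
      exact hmin k (by omega) ⟨V', hV', hcon⟩
    refine ⟨k+1, cb_sub p hx.1 hk'.le, ?_⟩
    set S' := {V' ∈ S | V' < V ∨ V < V'} with hS'
    have hIH := ih S' (T.erase (r V)) (by rw [Finset.card_erase_of_mem (hS V hV), hT]; rfl)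
      (by
        intro V' hV'
        refine Finset.mem_erase.2 ⟨?_, hS V' hV'.1⟩
        rcases hV'.2 with h | h
        · exact (hr h).ne
        · exact (hr h).ne') x hx0 k (hK.trans hKk) (fun V' hV' => hpar V' hV'.1)
    obtain ⟨z, hz, hz1⟩ := hpar V hV
    have hG := hg V x hx0 k (hK.trans hKk) z hz hz1
    have hsub : {x ∈ cb p x₁ K | ¬ Prot ε (ψ x) S} ∩ cb p x (k+1) ⊆
        {y ∈ cb p x k | ¬ Prot ε (ψ y) S'} ∪ {y ∈ cb p x k | ψ y V < ε} := by
      rintro y ⟨⟨_, hy⟩, hyk⟩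
      have hyk2 := cb_mono p x (Nat.le_succ k) hyk
      by_cases h1 : ψ y V < ε
      · exact Or.inr ⟨hyk2, h1⟩
      · refine Or.inl ⟨hyk2, fun h2 => hy ?_⟩
        exact Prot.step S V hV (not_lt.1 h1) (hVk y hyk).le h2
    calc _ ≤ (eK D j : ℝ≥0∞) * ω * μ (cb p x k) + ω * μ (cb p x k) :=
          (measure_mono hsub).trans ((measure_union_le _ _).trans (add_le_add hIH hG))
      _ = ((eK D j : ℝ≥0∞) + 1) * ω * μ (cb p x k) := by ring
      _ ≤ ((eK D j : ℝ≥0∞) + 1) * ω * (D * μ (cb p x (k+1))) := by gcongr; exact hD _ _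
      _ = _ := by rw [eK]; push_cast; ring

lemma prot_end {N : ℕ} (t : ℕ) (y : Fin N → ℚ_[p]) (R ε B : ℝ) (hR : 0 < R) (hε1 : ε ≤ 1)
    (q : Fin N → ℤ) (hqy : (p:ℝ)^t * ‖lf p q y‖ ≤ 1) (hB : ∀ l, |(q l:ℝ)| ≤ B) (hB0 : 0 ≤ B)
    (ψ : Submodule ℚ (Fin N → ℚ) → ℝ) (hψ : ∀ V, ψ V = hcov p t V y / R ^ Module.finrank ℚ V)
    (S : Set (Submodule ℚ (Fin N → ℚ))) (hS : Prot ε ψ S) :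
    ∀ A E : Submodule ℚ (Fin N → ℚ), A ≤ E → castQ q ∉ A → castQ q ∈ E →
      (∀ V, A < V → V < E → V ∈ S) → (E ∈ S ∨ ε ≤ ψ E) → ψ A ≤ 1 →
      (∀ V ∈ S, (V ≤ A ∨ A < V) ∧ (V < E ∨ E ≤ V)) → ε * R ≤ N * B := by
  induction hS with
  | base S h =>
    intro A E hAE hqA hqE hIoo hE hA hcomp
    have hVE : A ⊔ Submodule.span ℚ {castQ q} ≤ E :=
      sup_le hAE ((Submodule.span_singleton_le_iff_mem _ _).2 hqE)
    have hAV : A < A ⊔ Submodule.span ℚ {castQ q} := by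
      refine lt_of_le_of_ne le_sup_left fun h => hqA ?_
      rw [h]
      exact (le_sup_right : Submodule.span ℚ {castQ q} ≤ _) (Submodule.mem_span_singleton_self _)
    have h1 := F2 p t A y q hqA hqy B hB
    have h2 : ε ≤ ψ (A ⊔ Submodule.span ℚ {castQ q}) := by
      rcases hVE.lt_or_eq with h3 | h3
      · exact hε1.trans (h _ (hIoo _ hAV h3))
      · rw [h3]
        rcases hE with hE | hE
        · exact hε1.trans (h _ hE)
        · exact hE
    rw [hψ, Submodule.finrank_sup_span_singleton hqA, le_div_iff₀ (by positivity), pow_succ] at h2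
    rw [hψ, div_le_one (by positivity)] at hA
    have hRr : 0 < R ^ Module.finrank ℚ A := by positivity
    have h3 : (N:ℝ) * B * hcov p t A y ≤ N * B * R ^ Module.finrank ℚ A := by gcongr
    have h4 : R ^ Module.finrank ℚ A * (ε * R) ≤ R ^ Module.finrank ℚ A * (N * B) := by linarith
    exact le_of_mul_le_mul_left h4 hRr
  | step S U hU h1 h2 h ih =>
    intro A E hAE hqA hqE hIoo hE hA hcomp
    rcases hcomp U hU with ⟨hUA, hUE⟩
    rcases hUA with hUA | hUA
    · -- U ≤ A
      have hAE' : A < E := lt_of_le_of_ne hAE fun h => hqA (h ▸ hqE)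
      refine ih A E hAE hqA hqE (fun V hV1 hV2 => ⟨hIoo V hV1 hV2, Or.inr (hUA.trans_lt hV1)⟩) ?_ hA
        (fun V hV => hcomp V hV.1)
      exact hE.imp (fun h => ⟨h, Or.inr (hUA.trans_lt hAE')⟩) id
    rcases hUE with hUE | hUE
    · -- A < U < E
      by_cases hqU : castQ q ∈ U
      · refine ih A U hUA.le hqA hqU (fun V hV1 hV2 => ⟨hIoo V hV1 (hV2.trans hUE), Or.inl hV2⟩)
          (Or.inr h1) hA (fun V hV => ⟨(hcomp V hV.1).1, hV.2.imp id le_of_lt⟩)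
      · refine ih U E hUE.le hqU hqE (fun V hV1 hV2 => ⟨hIoo V (hUA.trans hV1) hV2, Or.inr hV1⟩)
          ?_ h2 (fun V hV => ⟨hV.2.imp le_of_lt id, (hcomp V hV.1).2⟩)
        exact hE.imp (fun h => ⟨h, Or.inr hUE⟩) id
    · refine ih A E hAE hqA hqE (fun V hV1 hV2 => ⟨hIoo V hV1 hV2, Or.inl (hV2.trans_le hUE)⟩) ?_ hA
        (fun V hV => hcomp V hV.1)
      rcases hUE.lt_or_eq with h3 | h3
      · exact hE.imp (fun h => ⟨h, Or.inl h3⟩) id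
      · exact Or.inr (h3 ▸ h1)

/-- The quantitative nondivergence statement. -/
lemma kmc {d N : ℕ} (f : (Fin d → ℚ_[p]) → (Fin N → ℚ_[p])) (x₀ : Fin d → ℚ_[p])
    (hf : AnalyticAt ℚ_[p] f x₀) : ∃ (k0 : ℕ),
      ∀ (μ : Measure (Fin d → ℚ_[p])), μ.IsAddHaarMeasure → ∃ C al : ℝ, 0 < C ∧ 0 < al ∧
      ∀ (t : ℕ) (R ε : ℝ), 0 < R → 0 < ε → ε ≤ 1 →
      (∀ V : Submodule ℚ (Fin N → ℚ), R ^ Module.finrank ℚ V ≤ hcov p t V (f x₀)) →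
      μ {x ∈ cb p x₀ k0 | ∃ q : Fin N → ℤ, q ≠ 0 ∧ (p:ℝ)^t * ‖lf p q (f x)‖ ≤ 1 ∧
        ∃ B : ℝ, (∀ l, |(q l:ℝ)| ≤ B) ∧ N * B < ε * R} ≤
        ENNReal.ofReal (C * ε^al) * μ (cb p x₀ k0) := by
  obtain ⟨k0, hcont, hgood⟩ := good p f x₀ hf
  refine ⟨k0, fun μ hμ => ?_⟩
  obtain ⟨D, hD1, hD⟩ := haar_doubling p μ
  obtain ⟨C, al, hC, hal, hg⟩ := hgood μ hμ
  refine ⟨((eK D (N+1) : ℕ) + 1) * C, al, by positivity, hal, ?_⟩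
  intro t R ε hR hε hε1 hV
  let ψ : (Fin d → ℚ_[p]) → Submodule ℚ (Fin N → ℚ) → ℝ :=
    fun x V => hcov p t V (f x) / R ^ Module.finrank ℚ V
  have hlf : ∀ (q : Fin N → ℤ) y, lf p q y = (fun l => (q l : ℚ_[p])) ⬝ᵥ y := fun q y => rfl
  have hk := km p (fun V : Submodule ℚ (Fin N → ℚ) => Module.finrank ℚ V)
    (fun V V' h => Submodule.finrank_lt_finrank_of_lt h) μ D hD ψ x₀ k0 ε
    (ENNReal.ofReal (C * ε^al)) ?_ ?_ (N+1) (Set.Ioi ⊥) (Finset.range (N+1)) (by simp)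
    (fun V _ => Finset.mem_range.2 (Nat.lt_succ_of_le ((Submodule.finrank_le _).trans (by simp))))
    x₀ (mem_cb_self p x₀ k0) k0 le_rfl
    (fun V _ => ⟨x₀, mem_cb_self p x₀ k0, (one_le_div (by positivity)).2 (hV V)⟩)
  · refine (measure_mono ?_).trans (hk.trans ?_)
    · rintro x ⟨hx, q, hq0, hq, B, hB, hNB⟩
      refine ⟨hx, fun hprot => ?_⟩
      obtain ⟨l, hl⟩ : ∃ l, q l ≠ 0 := by
        by_contra hcon
        push Not at hcon
        exact hq0 (funext hcon)
      have hB0 : 0 ≤ B := (abs_nonneg _).trans (hB l)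
      have := prot_end p t (f x) R ε B hR hε1 q hq hB hB0 (ψ x) (fun V => rfl) (Set.Ioi ⊥) hprot
        ⊥ ⊤ bot_le ?_ trivial (fun V hV _ => hV) ?_ ?_ ?_
      · linarith
      · simp only [Submodule.mem_bot]
        intro h
        have := congrFun h l
        simp [castQ, hl] at this
      · left
        have : Nonempty (Fin N) := ⟨l⟩
        exact (bot_lt_top : (⊥ : Submodule ℚ (Fin N → ℚ)) < ⊤)
      · simp only [ψ, finrank_bot, pow_zero, div_one]
        exact hcov_bot p t (f x)
      · exact fun V hV => ⟨Or.inr hV, le_top.lt_or_eq.imp id ge_of_eq⟩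
    · refine mul_le_mul' ?_ le_rfl
      rw [mul_assoc _ C, ENNReal.ofReal_mul (p := (eK D (N+1) : ℝ) + 1) (by positivity)]
      refine mul_le_mul' ?_ le_rfl
      rw [← ENNReal.ofReal_natCast]
      exact ENNReal.ofReal_le_ofReal (by linarith)
  · intro V x hx hlt
    have hcψ : ContinuousOn (fun x => ψ x V) (cb p x₀ k0) := by
      have : Continuous fun y : Fin N → ℚ_[p] => hcov p t V y / R ^ Module.finrank ℚ V := by
        unfold hcov tau lf
        fun_prop
      exact this.comp_continuousOn hcont
    have hnhds : {y | ψ y V < 1} ∈ nhds x := by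
      have h1 := hcψ.continuousAt ((cb_open p x₀ k0).mem_nhds hx)
      exact h1.eventually_lt continuousAt_const hlt
    obtain ⟨r, hr, hr2⟩ := Metric.mem_nhds_iff.1 hnhds
    obtain ⟨k, hk⟩ := exists_rad_lt p r hr
    exact ⟨k, fun y hy => hr2 (closedBall_subset_ball hk hy)⟩
  · intro V x₁ hx₁ K hK z hz h1
    have hW0 : (0:ℝ) ≤ W (latB V) := by positivity
    have hRr : 0 < R ^ Module.finrank ℚ V := by positivity
    have hpt : (0:ℝ) < (p:ℝ)^t := by have := (Fact.out : p.Prime).pos; positivity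
    by_cases hmax : (p:ℝ)^t * tau p (latB V) (f z) ≤ 1
    · have : {x ∈ cb p x₁ K | ψ x V < ε} = ∅ := by
        ext x
        simp only [Set.mem_ofPred_eq, Set.mem_empty_iff_false, iff_false, not_and, not_lt]
        intro _
        refine hε1.trans (h1.trans ?_)
        simp only [ψ, hcov]
        rw [max_eq_left hmax]
        gcongr
        exact le_max_left _ _
      rw [this]; simp
    · push Not at hmax
      have htau : 0 < tau p (latB V) (f z) := by
        by_contra hcon
        push Not at hcon
        nlinarith
      obtain ⟨i, hi⟩ : ∃ i, tau p (latB V) (f z) ≤ ‖lf p (latB V i) (f z)‖ := by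
        by_contra hcon
        push Not at hcon
        exact lt_irrefl _ ((pi_norm_lt_iff htau).2 hcon)
      refine (measure_mono ?_).trans (hg (fun l => (latB V i l : ℚ_[p])) x₁ hx₁ K hK z hz ε hε hε1)
      rintro x ⟨hx, hlt⟩
      refine ⟨hx, ?_⟩
      rw [← hlf, ← hlf]
      by_contra hcon
      push Not at hcon
      have h2 : ‖lf p (latB V i) (f x)‖ ≤ tau p (latB V) (f x) :=
        norm_le_pi_norm (fun i => lf p (latB V i) (f x)) i
      have h3 : ε * hcov p t V (f z) ≤ hcov p t V (f x) := by
        unfold hcov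
        rw [max_eq_right hmax.le]
        have h4 : ε * ((p:ℝ)^t * tau p (latB V) (f z)) ≤ (p:ℝ)^t * tau p (latB V) (f x) := by
          have : ε * tau p (latB V) (f z) ≤ tau p (latB V) (f x) := by
            calc _ ≤ ε * ‖lf p (latB V i) (f z)‖ := by gcongr
              _ ≤ _ := hcon
              _ ≤ _ := h2
          calc _ = (p:ℝ)^t * (ε * tau p (latB V) (f z)) := by ring
            _ ≤ _ := by gcongr
        calc _ = (W (latB V) : ℝ) * (ε * ((p:ℝ)^t * tau p (latB V) (f z))) := by ring
          _ ≤ _ := by gcongr; exact h4.trans (le_max_right _ _)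
      have h5 : ε * ψ z V ≤ ψ x V := by
        simp only [ψ]
        rw [← mul_div_assoc]
        gcongr
      nlinarith

/-- Sup norm of an integer vector. -/
noncomputable def nz {N : ℕ} (q : Fin N → ℤ) : ℝ := ‖fun l => (q l : ℝ)‖

lemma abs_le_nz {N : ℕ} (q : Fin N → ℤ) (l : Fin N) : |(q l:ℝ)| ≤ nz q :=
  norm_le_pi_norm (fun l => (q l : ℝ)) l

lemma one_le_nz {N : ℕ} (q : Fin N → ℤ) (hq : q ≠ 0) : 1 ≤ nz q := by
  obtain ⟨l, hl⟩ := Function.ne_iff.1 hq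
  refine le_trans ?_ (abs_le_nz q l)
  exact_mod_cast Int.one_le_abs hl

lemma exists_nz {N : ℕ} (q : Fin N → ℤ) (hq : q ≠ 0) : ∃ l, nz q ≤ |(q l:ℝ)| := by
  by_contra hcon
  push Not at hcon
  exact lt_irrefl _ ((pi_norm_lt_iff (by linarith [one_le_nz q hq])).2 hcon : nz q < nz q)

/-- Diophantine condition for integer vectors. -/
def DC {N : ℕ} (w : ℝ) (y : Fin N → ℚ_[p]) : Prop :=
  ∃ ℓ : ℝ, 1 ≤ ℓ ∧ ∀ q : Fin N → ℤ, q ≠ 0 → (ℓ * nz q) ^ (-w) ≤ ‖lf p q y‖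

lemma rpow_neg_le_of {X P w : ℝ} (hw : 0 < w) (hX : 0 < X) (hP : 0 < P) (h : P ^ (1/w) ≤ X) :
    X ^ (-w) ≤ P⁻¹ := by
  rw [Real.rpow_neg hX.le]
  apply inv_anti₀ hP
  calc P = (P ^ (1/w))^w := by rw [← Real.rpow_mul hP.le]; field_simp; simp
    _ ≤ X ^ w := by gcongr

lemma of_rpow_neg_le {X P w : ℝ} (hw : 0 < w) (hX : 0 < X) (hP : 0 < P) (h : X ^ (-w) ≤ P⁻¹) :
    P ^ (1/w) ≤ X := by
  rw [Real.rpow_neg hX.le, inv_le_inv₀ (by positivity) hP] at h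
  calc P ^ (1/w) ≤ (X^w)^(1/w) := by gcongr
    _ = X := by rw [← Real.rpow_mul hX.le]; field_simp; simp

lemma dcMain {d N : ℕ} (hN : 0 < N) (f : (Fin d → ℚ_[p]) → (Fin N → ℚ_[p])) (x₀ : Fin d → ℚ_[p])
    (hf : AnalyticAt ℚ_[p] f x₀) : ∃ (k0 : ℕ),
      ∀ (μ : Measure (Fin d → ℚ_[p])), μ.IsAddHaarMeasure → ∀ w w' : ℝ, 0 < w → w < w' →
      DC p w (f x₀) → ∀ᵐ x ∂μ, x ∈ cb p x₀ k0 → DC p w' (f x) := by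
  obtain ⟨k0, hk⟩ := kmc p f x₀ hf
  refine ⟨k0, fun μ hμ w w' hw hww' hDC => ?_⟩
  obtain ⟨C, al, hC, hal, hk⟩ := hk μ hμ
  obtain ⟨ℓ, hℓ1, hℓ⟩ := hDC
  have hp1 : (1:ℝ) < p := by exact_mod_cast (Fact.out : p.Prime).one_lt
  have hp0 : (0:ℝ) < p := by linarith
  have hw' : 0 < w' := hw.trans hww'
  have hN0 : (0:ℝ) < N := by exact_mod_cast hN
  let R : ℕ → ℝ := fun t => (ℓ⁻¹ * ((p:ℝ)^t)^(1/w)) / N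
  let δ : ℝ := 1/w - 1/w'
  have hδ : 0 < δ := sub_pos.2 (one_div_lt_one_div_of_lt hw hww')
  let E : ℕ → ℝ := fun t => ((p:ℝ)^t)^(-δ)
  have hpt : ∀ t : ℕ, (1:ℝ) ≤ (p:ℝ)^t := fun t => one_le_pow₀ hp1.le
  have hpt0 : ∀ t : ℕ, (0:ℝ) < (p:ℝ)^t := fun t => by positivity
  have hE0 : ∀ t, 0 < E t := fun t => by have := hpt0 t; positivity
  have hE1 : ∀ t, E t ≤ 1 := fun t => Real.rpow_le_one_of_one_le_of_nonpos (hpt t) (by linarith)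
  have hR0 : ∀ t, 0 < R t := fun t => by have := hpt0 t; positivity
  have hER : ∀ t, E t * R t = (ℓ * N)⁻¹ * ((p:ℝ)^t)^(1/w') := by
    intro t
    simp only [E, R, δ]
    have : ((p:ℝ)^t)^(1/w') = ((p:ℝ)^t)^(-(1/w - 1/w')) * ((p:ℝ)^t)^(1/w) := by
      rw [← Real.rpow_add (hpt0 t)]; congr 1; ring
    rw [this]; field_simp
  let s : ℕ → Set (Fin d → ℚ_[p]) := fun t =>
    {x ∈ cb p x₀ k0 | ∃ q : Fin N → ℤ, q ≠ 0 ∧ (p:ℝ)^t * ‖lf p q (f x)‖ ≤ 1 ∧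
        ∃ B : ℝ, (∀ l, |(q l:ℝ)| ≤ B) ∧ N * B < E t * R t}
  have hs : ∀ t, μ (s t) ≤ ENNReal.ofReal (C * (E t)^al) * μ (cb p x₀ k0) := by
    intro t
    refine hk t (R t) (E t) (hR0 t) (hE0 t) (hE1 t) fun V => ?_
    refine F3 p hN t V (f x₀) (ℓ⁻¹ * ((p:ℝ)^t)^(1/w)) (by have := hpt0 t; positivity) fun q hq hq1 => ?_
    obtain ⟨l, hl⟩ := exists_nz q hq
    refine ⟨l, le_trans ?_ hl⟩
    rw [inv_mul_le_iff₀ (by linarith)]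
    have hq2 : ‖lf p q (f x₀)‖ ≤ ((p:ℝ)^t)⁻¹ := by
      rw [← one_div, le_div_iff₀ (hpt0 t)]; linarith
    exact of_rpow_neg_le hw (by nlinarith [one_le_nz q hq]) (hpt0 t) ((hℓ q hq).trans hq2)
  have hfin : μ (cb p x₀ k0) ≠ ∞ := (isCompact_closedBall x₀ _).measure_lt_top.ne
  have hsum : ∑' t, μ (s t) ≠ ∞ := by
    refine ne_top_of_le_ne_top ?_ (ENNReal.tsum_le_tsum hs)
    rw [ENNReal.tsum_mul_right]
    refine ENNReal.mul_ne_top ?_ hfin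
    have hgeo : Summable fun t : ℕ => C * (E t)^al := by
      have : ∀ t : ℕ, C * (E t)^al = C * ((p:ℝ)^(-δ*al))^t := by
        intro t
        simp only [E]
        rw [← Real.rpow_natCast, ← Real.rpow_natCast, ← Real.rpow_mul hp0.le, ← Real.rpow_mul hp0.le, ← Real.rpow_mul hp0.le]
        ring_nf
      simp_rw [this]
      refine (summable_geometric_of_lt_one (by positivity) ?_).mul_left C
      exact Real.rpow_lt_one_of_one_lt_of_neg hp1 (by nlinarith)
    exact hgeo.tsum_ofReal_ne_top
  filter_upwards [ae_eventually_notMem hsum] with x hx hxW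
  obtain ⟨t0, ht0⟩ := Filter.eventually_atTop.1 hx
  have key : ∀ t, t0 ≤ t → ∀ q : Fin N → ℤ, q ≠ 0 → (p:ℝ)^t * ‖lf p q (f x)‖ ≤ 1 →
      ((p:ℝ)^t)^(1/w') ≤ ℓ * N * N * nz q := by
    intro t ht q hq hq1
    by_contra hcon
    push Not at hcon
    refine ht0 t ht ⟨hxW, q, hq, hq1, nz q, abs_le_nz q, ?_⟩
    rw [hER, lt_inv_mul_iff₀ (by positivity)]
    linarith
  refine ⟨max 1 (max (ℓ * N * N) (((p:ℝ)^t0)^(1/w'))), le_max_left _ _, fun q hq => ?_⟩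
  have hnz := one_le_nz q hq
  have hm1 : ℓ * N * N ≤ max 1 (max (ℓ * N * N) (((p:ℝ)^t0)^(1/w'))) := (le_max_left _ _).trans (le_max_right _ _)
  have hm2 : ((p:ℝ)^t0)^(1/w') ≤ max 1 (max (ℓ * N * N) (((p:ℝ)^t0)^(1/w'))) := (le_max_right _ _).trans (le_max_right _ _)
  have hm0 : 1 ≤ max 1 (max (ℓ * N * N) (((p:ℝ)^t0)^(1/w'))) := le_max_left _ _
  generalize max 1 (max (ℓ * N * N) (((p:ℝ)^t0)^(1/w'))) = L at *
  have hL : 0 < L * nz q := by nlinarith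
  by_cases h0 : lf p q (f x) = 0
  · exfalso
    have h1 : ∀ t : ℕ, t0 ≤ t → ((p:ℝ)^t)^(1/w') ≤ ℓ * N * N * nz q :=
      fun t ht => key t ht q hq (by rw [h0]; simp)
    have h2 : Filter.Tendsto (fun t : ℕ => ((p:ℝ)^t)^(1/w')) Filter.atTop Filter.atTop :=
      (tendsto_rpow_atTop (by positivity)).comp (tendsto_pow_atTop_atTop_of_one_lt hp1)
    obtain ⟨t, ht, ht2⟩ := ((Filter.eventually_ge_atTop t0).and (h2.eventually_gt_atTop (ℓ * N * N * nz q))).exists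
    linarith [h1 t ht]
  · obtain ⟨m, hm'⟩ : ∃ m : ℤ, ‖lf p q (f x)‖ = (p:ℝ)^(-m) := ⟨_, Padic.norm_eq_zpow_neg_valuation h0⟩
    rcases le_or_gt (t0:ℤ) m with h | h
    · obtain ⟨t, rfl⟩ : ∃ t : ℕ, m = t := ⟨m.toNat, by omega⟩
      rw [hm', zpow_neg, zpow_natCast]
      refine rpow_neg_le_of hw' hL (hpt0 t) ((key t (by omega) q hq ?_).trans (by gcongr))
      rw [hm', zpow_neg, zpow_natCast, mul_inv_cancel₀ (hpt0 t).ne']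
    · have h1 : ((p:ℝ)^t0)⁻¹ ≤ ‖lf p q (f x)‖ := by
        rw [hm', ← zpow_natCast, ← zpow_neg]
        exact zpow_le_zpow_right₀ hp1.le (by omega)
      refine (rpow_neg_le_of hw' hL (hpt0 t0) ?_).trans h1
      nlinarith

lemma iSup_norm_eq {E : Type*} [NormedAddCommGroup E] {m : ℕ} (g : Fin m → E) : ⨆ i, ‖g i‖ = ‖g‖ := by
  apply le_antisymm
  · exact Real.iSup_le (fun i => norm_le_pi_norm g i) (norm_nonneg _)
  · refine (pi_norm_le_iff_of_nonneg (Real.iSup_nonneg fun i => norm_nonneg _)).2 fun i => ?_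
    exact le_ciSup (f := fun i => ‖g i‖) (Set.finite_range _).bddAbove i

lemma supNormR_eq {m : ℕ} (q : Fin m → ℚ) : supNormR q = ‖fun i => (q i : ℝ)‖ :=
  iSup_norm_eq (fun i => (q i : ℝ))

lemma supNormP_eq {m : ℕ} (q : Fin m → ℚ) : supNormP p q = ‖fun i => (q i : ℚ_[p])‖ :=
  iSup_norm_eq (fun i => (q i : ℚ_[p]))

lemma supNormR_smul {m : ℕ} (c : ℚ) (q : Fin m → ℚ) :
    supNormR (fun i => c * q i) = |(c:ℝ)| * supNormR q := by
  rw [supNormR_eq, supNormR_eq, ← Real.norm_eq_abs, ← norm_smul]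
  congr 1; ext i; simp

lemma supNormP_smul {m : ℕ} (c : ℚ) (q : Fin m → ℚ) :
    supNormP p (fun i => c * q i) = ‖(c : ℚ_[p])‖ * supNormP p q := by
  rw [supNormP_eq, supNormP_eq, ← norm_smul]
  congr 1

lemma cons_mul {m : ℕ} (c q0 : ℚ) (q : Fin m → ℚ) :
    (Fin.cons (c * q0) (fun i => c * q i) : Fin (m+1) → ℚ) = fun i => c * (Fin.cons q0 q : Fin (m+1) → ℚ) i := by
  ext i; refine Fin.cases ?_ (fun j => ?_) i <;> simp

lemma lf_cons {n : ℕ} (q : Fin (n+1) → ℤ) (y : Fin n → ℚ_[p]) :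
    lf p q (Fin.cons 1 y) = (∑ i : Fin n, (q i.succ : ℚ_[p]) * y i) + (q 0 : ℚ_[p]) := by
  rw [lf, Fin.sum_univ_succ]; simp; ring

lemma dc_of_not {n : ℕ} (y : Fin n → ℚ_[p]) (v : ℝ) (hv : 0 < v) (h : ¬ WpCond p y v) :
    DC p (v+1) (Fin.cons 1 y : Fin (n+1) → ℚ_[p]) := by
  unfold WpCond at h
  push Not at h
  obtain ⟨T, hT⟩ := h
  have hp1 : (1:ℝ) < p := by exact_mod_cast (Fact.out : p.Prime).one_lt
  obtain ⟨j, hj⟩ := pow_unbounded_of_one_lt T hp1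
  have hpj : (1:ℝ) ≤ (p:ℝ)^(j+1) := one_le_pow₀ hp1.le
  have hMT : T < (p:ℝ)^(j+1) + 1 := by
    have : (p:ℝ)^j ≤ (p:ℝ)^(j+1) := pow_le_pow_right₀ hp1.le (Nat.le_succ j)
    linarith
  refine ⟨(p:ℝ)^(j+1) + 1, by linarith, fun q hq => ?_⟩
  have hnz := one_le_nz q hq
  set M : ℝ := (p:ℝ)^(j+1) + 1 with hM
  have hM1 : 1 ≤ M := by linarith
  have hMnz : 1 ≤ M * nz q := by nlinarith
  by_cases hq' : ∀ i : Fin n, q i.succ = 0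
  · have hlf : lf p q (Fin.cons 1 y) = (q 0 : ℚ_[p]) := by
      rw [lf_cons]; simp [hq']
    have hq0 : q 0 ≠ 0 := by
      intro h0
      apply hq
      ext i
      refine Fin.cases h0 hq' i
    rw [hlf]
    have h1 := one_le_abs_mul_norm p (q 0) hq0
    rw [Nat.cast_natAbs, Int.cast_abs] at h1
    have h2 : (nz q)⁻¹ ≤ ‖(q 0 : ℚ_[p])‖ := by
      rw [inv_le_iff_one_le_mul₀ (by linarith)]
      refine h1.trans ?_
      rw [mul_comm]
      gcongr
      exact abs_le_nz q 0
    refine le_trans ?_ h2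
    calc (M * nz q)^(-(v+1)) ≤ (M * nz q)^(-1:ℝ) := Real.rpow_le_rpow_of_exponent_le hMnz (by linarith)
      _ = (M * nz q)⁻¹ := by rw [Real.rpow_neg_one]
      _ ≤ (nz q)⁻¹ := by
        apply inv_anti₀ (by linarith); nlinarith
  · push Not at hq'
    obtain ⟨i, hi⟩ := hq'
    let c : ℚ := (p:ℚ)^(j+1) + 1
    have hcR : (c:ℝ) = M := by simp [c, hM]
    have hcP : ‖(c : ℚ_[p])‖ = 1 := by
      have h1 : ‖((p:ℚ_[p])^(j+1))‖ < 1 := by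
        rw [norm_pow]
        exact pow_lt_one₀ (norm_nonneg _) Padic.norm_p_lt_one (by omega)
      have h2 : (c : ℚ_[p]) = (p:ℚ_[p])^(j+1) + 1 := by simp [c]
      rw [h2, IsUltrametricDist.norm_add_eq_max_of_norm_ne_norm (by rw [norm_one]; exact h1.ne), norm_one]
      exact max_eq_right h1.le
    let qQ : Fin n → ℚ := fun i => (q i.succ : ℚ)
    have hcons : (Fin.cons (q 0 : ℚ) qQ : Fin (n+1) → ℚ) = fun i => (q i : ℚ) := by
      ext i; refine Fin.cases ?_ (fun j => ?_) i <;> simp [qQ]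
    have hQ : supNormR (Fin.cons (q 0 : ℚ) qQ : Fin (n+1) → ℚ) = nz q := by
      rw [hcons, supNormR_eq, nz]; simp
    have hA1 : supNormP p qQ ≤ 1 := by
      rw [supNormP_eq]
      refine (pi_norm_le_iff_of_nonneg zero_le_one).2 fun i => ?_
      simpa [qQ] using Padic.norm_int_le_one (p := p) (q i.succ)
    have hAQ : 1 ≤ supNormP p qQ * nz q := by
      refine (one_le_abs_mul_norm p (q i.succ) hi).trans ?_
      rw [Nat.cast_natAbs, Int.cast_abs]
      rw [mul_comm]
      refine mul_le_mul ?_ (abs_le_nz q _) (abs_nonneg _) ?_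
      · rw [supNormP_eq]
        simpa [qQ] using norm_le_pi_norm (fun i => (qQ i : ℚ_[p])) i
      · rw [supNormP_eq]; positivity
    have hA0 : 0 < supNormP p qQ := by
      by_contra hcon
      push Not at hcon
      nlinarith
    have hz : ∀ a : ℤ, IsZInvP p (c * a) := fun a => ⟨((p:ℤ)^(j+1)+1) * a, 0, by simp [c]⟩
    have h3 := hT (c * q 0) (fun i => c * qQ i) (hz _) (fun i => hz _) ?_
    · rw [cons_mul, supNormR_smul, supNormP_smul, hcP, hQ, hcR, one_mul, abs_of_pos (by linarith)] at h3
      have h4 : (∑ i, ((c * qQ i : ℚ) : ℚ_[p]) * y i) + ((c * (q 0:ℚ) : ℚ) : ℚ_[p]) = (c:ℚ_[p]) * lf p q (Fin.cons 1 y) := by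
        rw [lf_cons, mul_add, Finset.mul_sum]
        push_cast
        simp only [qQ, mul_assoc]
        push_cast
        rfl
      rw [h4, norm_mul, hcP, one_mul] at h3
      refine le_trans ?_ h3
      have : (M * nz q)^(-(v+1)) = (M * nz q)^(-v) * (M * nz q)⁻¹ := by
        rw [← Real.rpow_neg_one, ← Real.rpow_add (by linarith)]; congr 1; ring
      rw [this]
      refine mul_le_mul_of_nonneg_right ?_ (by positivity)
      refine Real.rpow_le_rpow_of_nonpos (by positivity) ?_ (by linarith)
      nlinarith
    · rw [cons_mul, supNormR_smul, supNormP_smul, hcP, hQ, hcR, one_mul, abs_of_pos (by linarith)]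
      nlinarith

lemma int_of_zinv (q : ℚ) (hq : IsZInvP p q) (h : ‖(q : ℚ_[p])‖ ≤ 1) : ∃ z : ℤ, q = z := by
  obtain ⟨z, k, rfl⟩ := hq
  have hp0 : (p:ℚ) ≠ 0 := by exact_mod_cast (Fact.out : p.Prime).ne_zero
  have hp0' : (p:ℚ_[p]) ≠ 0 := by exact_mod_cast (Fact.out : p.Prime).ne_zero
  have h1 : ‖((z:ℤ) : ℚ_[p])‖ ≤ (p:ℝ)^(-(k:ℤ)) := by
    have : ((z:ℤ) : ℚ_[p]) = (((z:ℚ)/(p:ℚ)^k : ℚ) : ℚ_[p]) * (p:ℚ_[p])^k := by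
      push_cast; field_simp
    rw [this, norm_mul, Padic.norm_p_pow]
    have := rad_pos p k
    nlinarith
  rw [Padic.norm_int_le_pow_iff_dvd] at h1
  obtain ⟨a, ha⟩ := h1
  refine ⟨a, ?_⟩
  rw [ha]; push_cast; field_simp

lemma zinv_zpow (q : ℚ) (hq : IsZInvP p q) (m : ℤ) : IsZInvP p ((p:ℚ)^m * q) := by
  obtain ⟨z, k, rfl⟩ := hq
  have hp0 : (p:ℚ) ≠ 0 := by exact_mod_cast (Fact.out : p.Prime).ne_zero
  rcases Int.eq_nat_or_neg m with ⟨a, rfl | rfl⟩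
  · exact ⟨p^a * z, k, by push_cast; rw [zpow_natCast]; ring⟩
  · exact ⟨z, k + a, by rw [zpow_neg, zpow_natCast, pow_add]; field_simp⟩

lemma not_of_dc {n : ℕ} (y : Fin n → ℚ_[p]) (v v' : ℝ) (hv : 0 < v) (hvv : v < v')
    (h : DC p (v+1) (Fin.cons 1 y : Fin (n+1) → ℚ_[p])) : ¬ WpCond p y v' := by
  intro hW
  obtain ⟨ℓ, hℓ1, hℓ⟩ := h
  have hp1 : (1:ℝ) < p := by exact_mod_cast (Fact.out : p.Prime).one_lt
  have hp0 : (0:ℝ) < p := by linarith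
  have hpq : (p:ℚ) ≠ 0 := by exact_mod_cast (Fact.out : p.Prime).ne_zero
  obtain ⟨s, hs⟩ := pow_unbounded_of_one_lt (max 1 ‖y‖) hp1
  have hps : (0:ℝ) < (p:ℝ)^s := by positivity
  set L : ℝ := ℓ * (p:ℝ)^s with hL
  have hL0 : 0 < L := by positivity
  obtain ⟨q0, q, hz0, hz, hT, hlt⟩ := hW (max 1 (L ^ ((v+1)/(v'-v))))
  set Q := supNormR (Fin.cons q0 q : Fin (n+1) → ℚ) with hQdef
  set A := supNormP p q with hAdef
  have hA00 : 0 ≤ A := by rw [hAdef, supNormP_eq]; positivity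
  have hQ00 : 0 ≤ Q := by rw [hQdef, supNormR_eq]; positivity
  have hX1 : 1 < A * Q := lt_of_le_of_lt (le_max_left _ _) hT
  have hX2 : L ^ ((v+1)/(v'-v)) < A * Q := lt_of_le_of_lt (le_max_right _ _) hT
  have hA0 : 0 < A := by
    rcases hA00.lt_or_eq with h | h
    · exact h
    · rw [← h] at hX1; linarith
  have hQ0 : 0 < Q := by
    rcases hQ00.lt_or_eq with h | h
    · exact h
    · rw [← h] at hX1; linarith
  -- A is a power of p
  obtain ⟨i, hi⟩ : ∃ i, A ≤ ‖(q i : ℚ_[p])‖ := by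
    by_contra hcon
    push Not at hcon
    rw [hAdef, supNormP_eq] at hcon hA0
    exact lt_irrefl _ ((pi_norm_lt_iff hA0).2 hcon)
  have hAle : ∀ i, ‖(q i : ℚ_[p])‖ ≤ A := by
    intro i
    rw [hAdef, supNormP_eq]
    exact norm_le_pi_norm (fun i => (q i : ℚ_[p])) i
  have hqi0 : (q i : ℚ_[p]) ≠ 0 := by
    intro h0
    rw [h0, norm_zero] at hi
    linarith
  obtain ⟨m, hm⟩ : ∃ m : ℤ, A = (p:ℝ)^m := by
    refine ⟨-(q i : ℚ_[p]).valuation, ?_⟩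
    rw [← Padic.norm_eq_zpow_neg_valuation hqi0]
    exact le_antisymm hi (hAle i)
  let c : ℚ := (p:ℚ)^m
  have hcR : (c:ℝ) = A := by rw [hm]; simp [c]
  have hcP : ‖(c:ℚ_[p])‖ = A⁻¹ := by
    have : (c:ℚ_[p]) = (p:ℚ_[p])^m := by simp [c]
    rw [this, hm, Padic.norm_p_zpow, zpow_neg]
  have hcs : ‖((p:ℚ_[p])^s)‖ = ((p:ℝ)^s)⁻¹ := by
    rw [Padic.norm_p_pow, zpow_neg, zpow_natCast]
  set Λ : ℚ_[p] := (∑ i, (q i : ℚ_[p]) * y i) + (q0 : ℚ_[p]) with hΛ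
  have hΛle : A⁻¹ * ‖Λ‖ < (A*Q)^(-(v'+1)) := by
    have : (A*Q)^(-(v'+1)) = A⁻¹ * ((A*Q)^(-v') * Q⁻¹) := by
      have h1 : (A*Q)^(-(v'+1)) = (A*Q)^(-v') * (A*Q)⁻¹ := by
        rw [← Real.rpow_neg_one, ← Real.rpow_add (by linarith)]; congr 1; ring
      rw [h1]; field_simp
    rw [this]
    exact mul_lt_mul_of_pos_left hlt (by positivity)
  have hΛ1 : A⁻¹ * ‖Λ‖ ≤ 1 :=
    hΛle.le.trans (Real.rpow_le_one_of_one_le_of_nonpos hX1.le (by linarith))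
  have hq0 : A⁻¹ * ‖(q0 : ℚ_[p])‖ ≤ (p:ℝ)^s := by
    have h1 : (q0 : ℚ_[p]) = Λ - ∑ i, (q i : ℚ_[p]) * y i := by rw [hΛ]; ring
    have h2 : ‖∑ i, (q i : ℚ_[p]) * y i‖ ≤ A * ‖y‖ := by
      refine IsUltrametricDist.norm_sum_le_of_forall_le_of_nonneg (by positivity) fun i _ => ?_
      rw [norm_mul]
      exact mul_le_mul (hAle i) (norm_le_pi_norm y i) (norm_nonneg _) hA00
    rw [inv_mul_le_iff₀ hA0, h1]
    refine (nsub_le_max p _ _).trans (max_le ?_ ?_)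
    · rw [inv_mul_le_iff₀ hA0] at hΛ1
      refine hΛ1.trans ?_
      gcongr
      exact (le_max_left _ _).trans hs.le
    · refine h2.trans ?_
      gcongr
      exact (le_max_right _ _).trans hs.le
  have hz0' : ∃ z : ℤ, (p:ℚ)^s * c * q0 = z := by
    refine int_of_zinv p _ ?_ ?_
    · have := zinv_zpow p q0 hz0 (s + m)
      rwa [zpow_add₀ hpq, zpow_natCast] at this
    · push_cast
      rw [norm_mul, norm_mul, hcs, hcP, mul_assoc, inv_mul_le_iff₀ hps, mul_one]
      exact hq0
  have hz' : ∀ i, ∃ z : ℤ, (p:ℚ)^s * c * q i = z := by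
    intro i
    refine int_of_zinv p _ ?_ ?_
    · have := zinv_zpow p (q i) (hz i) (s + m)
      rwa [zpow_add₀ hpq, zpow_natCast] at this
    · push_cast
      rw [norm_mul, norm_mul, hcs, hcP, mul_assoc, inv_mul_le_iff₀ hps, mul_one, inv_mul_le_iff₀ hA0]
      have : 1 ≤ (p:ℝ)^s := (le_max_left _ _).trans hs.le
      nlinarith [hAle i]
  obtain ⟨z0, hz0'⟩ := hz0'
  choose z hz' using hz'
  let qz : Fin (n+1) → ℤ := Fin.cons z0 z
  have hqz : ∀ l, (qz l : ℚ) = (p:ℚ)^s * c * (Fin.cons q0 q : Fin (n+1) → ℚ) l := by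
    intro l
    refine Fin.cases ?_ (fun j => ?_) l
    · simpa [qz] using hz0'.symm
    · simpa [qz] using (hz' j).symm
  have hnz : nz qz = (p:ℝ)^s * (A * Q) := by
    have h1 : nz qz = supNormR (fun l => (qz l : ℚ)) := by
      rw [supNormR_eq, nz]; simp
    rw [h1]
    simp_rw [hqz]
    rw [supNormR_smul, ← hQdef]
    push_cast
    rw [hcR, abs_of_pos (by positivity), mul_assoc]
  have hqz0 : qz ≠ 0 := by
    intro h0
    rw [h0] at hnz
    have : nz (0 : Fin (n+1) → ℤ) = 0 := by
      have h2 : (fun l => (((0 : Fin (n+1) → ℤ) l : ℤ) : ℝ)) = 0 := by ext; simp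
      rw [nz, h2, norm_zero]
    rw [this] at hnz
    have : 0 < (p:ℝ)^s * (A*Q) := by positivity
    linarith
  have hlfz : lf p qz (Fin.cons 1 y) = (p:ℚ_[p])^s * (c:ℚ_[p]) * Λ := by
    have hqz2 : ∀ l, (qz l : ℚ_[p]) = (p:ℚ_[p])^s * (c:ℚ_[p]) * ((Fin.cons q0 q : Fin (n+1) → ℚ) l : ℚ_[p]) := by
      intro l
      have := congrArg (fun r : ℚ => (r : ℚ_[p])) (hqz l)
      push_cast at this
      exact this
    rw [lf_cons, hΛ, mul_add, Finset.mul_sum]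
    simp only [hqz2, Fin.cons_succ, Fin.cons_zero, mul_assoc]
  have hfinal := hℓ qz hqz0
  rw [hlfz, norm_mul, norm_mul, hcs, hcP, mul_assoc, hnz] at hfinal
  set X := A * Q with hX
  have hX0 : 0 < X := by linarith
  have h1 : (ℓ * ((p:ℝ)^s * X))^(-(v+1)) < X^(-(v'+1)) := by
    refine hfinal.trans_lt (lt_of_le_of_lt ?_ hΛle)
    have : ((p:ℝ)^s)⁻¹ ≤ 1 := inv_le_one_of_one_le₀ ((le_max_left _ _).trans hs.le)
    have h2 : 0 ≤ A⁻¹ * ‖Λ‖ := by positivity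
    nlinarith
  rw [← mul_assoc, ← hL, Real.mul_rpow hL0.le hX0.le, Real.rpow_neg hL0.le, inv_mul_lt_iff₀ (by positivity)] at h1
  have h2 : X^(v'-v) < L^(v+1) := by
    have e : X^(v'-v) = X^(-(v+1)) * X^(v'+1) := by rw [← Real.rpow_add hX0]; congr 1; ring
    have e2 : X^(-(v'+1)) * X^(v'+1) = 1 := by rw [← Real.rpow_add hX0]; simp
    have h3 : 0 < X^(v'+1) := by positivity
    rw [e]
    calc _ < L^(v+1) * X^(-(v'+1)) * X^(v'+1) := by gcongr
      _ = _ := by rw [mul_assoc, e2, mul_one]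
  have hd : 0 < v' - v := by linarith
  have h4 : L^(v+1) < X^(v'-v) := by
    have e : L^(v+1) = (L^((v+1)/(v'-v)))^(v'-v) := by
      rw [← Real.rpow_mul hL0.le]; congr 1; field_simp
    rw [e]
    exact Real.rpow_lt_rpow (by positivity) hX2 hd
  linarith

/-- If `f : U → ℚ_p^n` is analytic on an open `U ⊆ ℚ_p^d`, `v ≥ n` and
`w_p(f(x₀)) ≤ v` for some `x₀ ∈ U`, then for Haar-almost every `x` in a neighbourhood of
`x₀` one has `w_p(f(x)) ≤ v`. -/
theorem statement3 (p : ℕ) [Fact p.Prime] (n d : ℕ) (hn : 1 ≤ n) (hd : 1 ≤ d)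
    (U : Set (Fin d → ℚ_[p])) (hU : IsOpen U)
    (f : (Fin d → ℚ_[p]) → (Fin n → ℚ_[p])) (hf : AnalyticOnNhd ℚ_[p] f U)
    (v : ℝ) (hv : (n : ℝ) ≤ v) (x₀ : Fin d → ℚ_[p]) (hx₀ : x₀ ∈ U)
    (hw : wpExp p (f x₀) ≤ ENNReal.ofReal v) :
    ∃ W : Set (Fin d → ℚ_[p]), W ∈ nhds x₀ ∧
      ∀ (μ : Measure (Fin d → ℚ_[p])), μ.IsAddHaarMeasure →
        ∀ᵐ x ∂μ, x ∈ W → wpExp p (f x) ≤ ENNReal.ofReal v := by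
  have hv0 : 0 ≤ v := le_trans (by positivity) hv
  have hnot : ∀ v', v < v' → ¬ WpCond p (f x₀) v' := by
    intro v' hv' hW
    have h1 : ENNReal.ofReal v' ≤ wpExp p (f x₀) :=
      le_iSup₂_of_le (f := fun (v : ℝ) (_ : 0 < v ∧ WpCond p (f x₀) v) => ENNReal.ofReal v)
        v' ⟨by linarith, hW⟩ le_rfl
    have h2 := (ENNReal.ofReal_le_ofReal_iff hv0).1 (h1.trans hw)
    linarith
  let F : (Fin d → ℚ_[p]) → (Fin (n+1) → ℚ_[p]) := fun x => Fin.cons 1 (f x)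
  have hF : AnalyticAt ℚ_[p] F x₀ := by
    have hfa := hf x₀ hx₀
    rw [analyticAt_pi_iff] at hfa ⊢
    intro i
    refine Fin.cases ?_ (fun j => ?_) i
    · simp only [F, Fin.cons_zero]; exact analyticAt_const
    · simp only [F, Fin.cons_succ]; exact hfa j
  obtain ⟨k0, hk⟩ := dcMain p (Nat.succ_pos n) F x₀ hF
  refine ⟨cb p x₀ k0, (cb_open p x₀ k0).mem_nhds (mem_cb_self p x₀ k0), fun μ hμ => ?_⟩
  have hall : ∀ i : ℕ, ∀ᵐ x ∂μ, x ∈ cb p x₀ k0 → DC p (v + 1/((i:ℝ)+1) + 1) (F x) := by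
    intro i
    have hi : (0:ℝ) < 1/((i:ℝ)+1) := by positivity
    refine hk μ hμ (v + 1/((i:ℝ)+1)/2 + 1) _ (by linarith) (by linarith) ?_
    exact dc_of_not p (f x₀) _ (by linarith) (hnot _ (by linarith))
  filter_upwards [ae_all_iff.2 hall] with x hx hxW
  refine iSup₂_le fun v' hv' => ?_
  by_contra hcon
  have hlt : v < v' := by
    by_contra h
    exact hcon (ENNReal.ofReal_le_ofReal (not_lt.1 h))
  obtain ⟨i, hi⟩ := exists_nat_one_div_lt (sub_pos.2 hlt)
  exact not_of_dc p (f x) (v + 1/((i:ℝ)+1)) v' (by positivity) (by linarith) (hx i hxW) hv'.2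

end PadicDioph
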